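/- arXiv:1110.2351 — 4 statements merged into one kernel-verified Lean document; each statement's English description precedes it below -/
import Mathlib

section
/- Let K be a field of characteristic zero and f ∈ K[X] an irreducible polynomial of prime degree p with splitting field L over K. Then f is solvable by radicals if and only if for every pair of distinct roots x, y of f in L one has L = K(x, y), i.e., every root of f is a rational expression in any two given roots (Galois's criterion of solvability for irreducible equations of prime degree). -/
open Polynomial IntermediateField

theorem gc_groupA {G X : Type*} [Group G] [Finite G] [MulAction G X] [FaithfulSMul G X]
    [MulAction.IsPretransitive G X] (hp : (Nat.card X).Prime) (hG : Group.IsSolvable G)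
    (x y : X) (hxy : x ≠ y) (g : G) (hx : g • x = x) (hy : g • y = y) : g = 1 := by
  have hprim : MulAction.IsPreprimitive G X := MulAction.IsPreprimitive.of_prime_card hp
  have hXfin : Finite X := (Nat.card_ne_zero.mp hp.ne_zero).2
  -- nontrivial abelian normal subgroup
  obtain ⟨A, hAn, hAne, hAc⟩ : ∃ A : Subgroup G, A.Normal ∧ A ≠ ⊥ ∧ ∀ a ∈ A, ∀ b ∈ A, a * b = b * a := by
    have hnt : Nontrivial G := by
      obtain ⟨h, hh⟩ := MulAction.exists_smul_eq G x y
      exact ⟨h, 1, by rintro rfl; simp at hh; exact hxy hh⟩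
    have hex := hG.solvable
    classical
    have hn := Nat.find_spec hex
    have h0 : Nat.find hex ≠ 0 := by
      intro h
      rw [h, derivedSeries_zero] at hn
      exact top_ne_bot hn
    obtain ⟨m, hm⟩ := Nat.exists_eq_succ_of_ne_zero h0
    refine ⟨derivedSeries G m, inferInstance, Nat.find_min hex (by omega), ?_⟩
    intro a ha b hb
    rw [hm, derivedSeries_succ] at hn
    have := Subgroup.commutator_mem_commutator ha hb
    rw [hn, Subgroup.mem_bot] at this
    exact commutatorElement_eq_one_iff_mul_comm.mp this
  have hAt : MulAction.IsPretransitive A X := by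
    apply MulAction.IsQuasiPreprimitive.isPretransitive_of_normal (G := G)
    intro h
    apply hAne
    rw [Subgroup.eq_bot_iff_forall]
    intro a ha
    apply FaithfulSMul.eq_of_smul_eq_smul (α := X)
    intro z
    have : z ∈ MulAction.fixedPoints A X := by rw [h]; trivial
    simpa using this ⟨a, ha⟩
  have hfree : ∀ a ∈ A, ∀ z : X, a • z = z → a = 1 := by
    intro a ha z hz
    apply FaithfulSMul.eq_of_smul_eq_smul (α := X)
    intro w
    obtain ⟨⟨b, hb⟩, rfl⟩ := MulAction.exists_smul_eq A z w
    change a • b • z = (1 : G) • b • z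
    rw [smul_smul, hAc a ha b hb, mul_smul, hz, one_smul]
  have hcard : Nat.card A = Nat.card X := by
    refine Nat.card_congr (Equiv.ofBijective (fun a : A => a • x) ⟨?_, ?_⟩)
    · rintro ⟨a, ha⟩ ⟨b, hb⟩ h
      change a • x = b • x at h
      have := hfree (b⁻¹ * a) (A.mul_mem (A.inv_mem hb) ha) x (by rw [mul_smul, h, inv_smul_smul])
      exact Subtype.ext (inv_mul_eq_one.mp this).symm
    · intro w; exact MulAction.exists_smul_eq A x w
  obtain ⟨⟨c, hc⟩, hcy⟩ := MulAction.exists_smul_eq A x y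
  change c • x = y at hcy
  have hgc : g * c * g⁻¹ = c := by
    have hm : g * c * g⁻¹ ∈ A := hAn.conj_mem c hc g
    have := hfree (c⁻¹ * (g * c * g⁻¹)) (A.mul_mem (A.inv_mem hc) hm) x (by
      rw [mul_smul, mul_smul, mul_smul, inv_smul_eq_iff.mpr hx.symm, hcy, hy, ← hcy, inv_smul_smul])
    exact (inv_mul_eq_one.mp this).symm
  have hcom : Subgroup.zpowers (⟨c, hc⟩ : A) = ⊤ := by
    have : Fact (Nat.card A).Prime := ⟨hcard ▸ hp⟩
    refine (Subgroup.eq_bot_or_eq_top_of_prime_card _).resolve_left ?_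
    intro h
    rw [Subgroup.zpowers_eq_bot] at h
    have : c = 1 := congrArg Subtype.val h
    rw [this, one_smul] at hcy
    exact hxy hcy
  apply FaithfulSMul.eq_of_smul_eq_smul (α := X)
  intro w
  obtain ⟨b, rfl⟩ := MulAction.exists_smul_eq A x w
  have hb : b ∈ Subgroup.zpowers (⟨c, hc⟩ : A) := by rw [hcom]; trivial
  obtain ⟨k, rfl⟩ := hb
  change g • (c ^ k) • x = (1 : G) • (c ^ k) • x
  have hcomm : Commute g c := by
    rw [mul_inv_eq_iff_eq_mul] at hgc
    exact hgc
  rw [smul_smul, (hcomm.zpow_right k).eq, mul_smul, hx, one_smul]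

theorem gc_groupB {G X : Type*} [Group G] [Finite G] [MulAction G X] [FaithfulSMul G X]
    [MulAction.IsPretransitive G X] (hp : (Nat.card X).Prime)
    (H : ∀ x y : X, x ≠ y → ∀ g : G, g • x = x → g • y = y → g = 1) : Group.IsSolvable G := by
  classical
  have hXfin : Finite X := (Nat.card_ne_zero.mp hp.ne_zero).2
  have hXne : Nonempty X := (Nat.card_ne_zero.mp hp.ne_zero).1
  let _ : Fintype G := Fintype.ofFinite G
  let _ : Fintype X := Fintype.ofFinite X
  obtain ⟨x0⟩ := hXne
  have : Fact (Nat.card X).Prime := ⟨hp⟩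
  -- counting
  set F : Finset G := Finset.univ.filter (fun g => ∀ x : X, g • x ≠ x) with hF
  have hone : (1 : G) ∉ F := by simp only [hF, Finset.mem_filter]; intro h; exact h.2 x0 (one_smul _ _)
  have hcount : F.card + 1 = Nat.card X := by
    let _ : Fintype (Quotient (MulAction.orbitRel G X)) := Fintype.ofFinite _
    have hb := MulAction.sum_card_fixedBy_eq_card_orbits_mul_card_group G X
    have ho : Fintype.card (Quotient (MulAction.orbitRel G X)) = 1 := by
      have := MulAction.pretransitive_iff_subsingleton_quotient G X |>.mp inferInstance
      have : Nonempty (Quotient (MulAction.orbitRel G X)) := ⟨Quotient.mk'' x0⟩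
      exact Fintype.card_eq_one_iff_nonempty_unique.mpr ⟨uniqueOfSubsingleton (Quotient.mk'' x0)⟩
    rw [ho, one_mul] at hb
    have hval : ∀ g : G, (Fintype.card (MulAction.fixedBy X g)) + (if g ∈ F then 1 else 0)
        = 1 + (if g = 1 then (Nat.card X - 1) else 0) := by
      intro g
      by_cases h1 : g = 1
      · subst h1
        rw [if_neg hone, if_pos rfl]
        have : Fintype.card (MulAction.fixedBy X (1 : G)) = Nat.card X := by
          rw [← Nat.card_eq_fintype_card]
          simp
        rw [this]
        have := hp.one_lt
        omega
      · rw [if_neg h1]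
        have hsub : Subsingleton (MulAction.fixedBy X g) := by
          refine ⟨fun a b => ?_⟩
          by_contra hab
          exact h1 (H a.1 b.1 (fun h => hab (Subtype.ext h)) g a.2 b.2)
        by_cases hgF : g ∈ F
        · rw [if_pos hgF]
          have : IsEmpty (MulAction.fixedBy X g) := by
            refine ⟨fun a => ?_⟩
            simp only [hF, Finset.mem_filter] at hgF
            exact hgF.2 a.1 a.2
          rw [Fintype.card_eq_zero]
        · rw [if_neg hgF]
          simp only [hF, Finset.mem_filter, Finset.mem_univ, true_and, not_forall, not_not] at hgF
          obtain ⟨z, hz⟩ := hgF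
          have : Nonempty (MulAction.fixedBy X g) := ⟨⟨z, hz⟩⟩
          rw [Fintype.card_eq_one_iff_nonempty_unique.mpr ⟨uniqueOfSubsingleton (⟨z, hz⟩ : MulAction.fixedBy X g)⟩]
    have hs := Finset.sum_congr (rfl : (Finset.univ : Finset G) = Finset.univ) (fun g _ => hval g)
    rw [Finset.sum_add_distrib, Finset.sum_add_distrib, hb] at hs
    simp only [Finset.sum_ite_mem, Finset.sum_ite_eq', Finset.univ_inter, Finset.sum_const,
      Finset.mem_univ, if_true, smul_eq_mul, mul_one, Finset.card_univ] at hs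
    have := hp.one_lt
    omega
  have hdvd : Nat.card X ∣ Nat.card G := by
    have := MulAction.card_orbit_mul_card_stabilizer_eq_card_group G x0
    rw [MulAction.orbit_eq_univ] at this
    rw [Nat.card_eq_fintype_card (α := G), ← this, Nat.card_eq_fintype_card]
    simp
  obtain ⟨a, ha⟩ := exists_prime_orderOf_dvd_card' (Nat.card X) hdvd
  set N := Subgroup.zpowers a with hN
  have hNcard : Nat.card N = Nat.card X := by rw [hN, Nat.card_zpowers, ha]
  have hNfree : ∀ n ∈ N, n ≠ 1 → ∀ x : X, n • x ≠ x := by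
    intro n hn hn1 x hx
    have htop : Subgroup.zpowers (⟨n, hn⟩ : N) = ⊤ := by
      have : Fact (Nat.card N).Prime := ⟨hNcard ▸ hp⟩
      refine (Subgroup.eq_bot_or_eq_top_of_prime_card _).resolve_left ?_
      intro h
      rw [Subgroup.zpowers_eq_bot] at h
      exact hn1 (congrArg Subtype.val h)
    have hfx : x ∈ MulAction.fixedPoints N X := by
      intro m
      have hm : m ∈ Subgroup.zpowers (⟨n, hn⟩ : N) := by rw [htop]; trivial
      have hle : Subgroup.zpowers (⟨n, hn⟩ : N) ≤ MulAction.stabilizer N x := by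
        rw [Subgroup.zpowers_le]; exact hx
      exact hle hm
    have hmod := (IsPGroup.of_card (p := Nat.card X) (n := 1) (by rw [hNcard, pow_one]) :
      IsPGroup (Nat.card X) N).card_modEq_card_fixedPoints X
    have hd : Nat.card X ∣ Nat.card (MulAction.fixedPoints N X) := by
      rw [← Nat.modEq_zero_iff_dvd]
      exact hmod.symm.trans (by simp [Nat.ModEq])
    have : Nonempty (MulAction.fixedPoints N X) := ⟨⟨x, hfx⟩⟩
    have hle := Nat.le_of_dvd Nat.card_pos hd
    have h1 : 1 < Nat.card (MulAction.fixedPoints N X) := lt_of_lt_of_le hp.one_lt hle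
    rw [Finite.one_lt_card_iff_nontrivial] at h1
    obtain ⟨u, v, huv⟩ := h1
    exact hn1 (H u.1 v.1 (fun h => huv (Subtype.ext h)) n (u.2 ⟨n, hn⟩) (v.2 ⟨n, hn⟩))
  have hNF : ∀ g : G, (∀ x : X, g • x ≠ x) → g ∈ N := by
    set N' : Finset G := Finset.univ.filter (fun g => g ∈ N) with hN'
    have hN'c : N'.card = Nat.card X := by
      rw [← hNcard, Nat.card_eq_fintype_card, Fintype.card_subtype]
    have hsub : N'.erase 1 ⊆ F := by
      intro g hg
      simp only [hN', hF, Finset.mem_erase, Finset.mem_filter, Finset.mem_univ, true_and] at hg ⊢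
      exact hNfree g hg.2 hg.1
    have heq : N'.erase 1 = F := by
      apply Finset.eq_of_subset_of_card_le hsub
      rw [Finset.card_erase_of_mem (by simp [hN', N.one_mem]), hN'c]
      omega
    intro g hg
    have : g ∈ N'.erase 1 := by rw [heq]; simp only [hF, Finset.mem_filter]; exact ⟨Finset.mem_univ _, hg⟩
    simp only [hN', Finset.mem_erase, Finset.mem_filter] at this
    exact this.2.2
  have hNn : N.Normal := by
    refine ⟨fun n hn g => ?_⟩
    by_cases h1 : n = 1
    · subst h1; simp [N.one_mem]
    · apply hNF
      intro x hx
      apply hNfree n hn h1 (g⁻¹ • x)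
      rw [mul_smul, mul_smul] at hx
      exact eq_inv_smul_iff.mpr hx
  have hNtrans : MulAction.IsPretransitive N X := by
    have : MulAction.IsPreprimitive G X := MulAction.IsPreprimitive.of_prime_card hp
    apply MulAction.IsQuasiPreprimitive.isPretransitive_of_normal (G := G)
    intro h
    have ha1 : a ≠ 1 := by
      rintro rfl
      rw [orderOf_one] at ha
      exact hp.one_lt.ne ha
    have : x0 ∈ MulAction.fixedPoints N X := by rw [h]; trivial
    exact hNfree a (Subgroup.mem_zpowers a) ha1 x0 (this ⟨a, Subgroup.mem_zpowers a⟩)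
  have hcyc : IsCyclic N := by rw [hN]; infer_instance
  have hs1 : Group.IsSolvable N := Group.isSolvable_of_comm (fun a b => by
    let := IsCyclic.commGroup (α := N); exact mul_comm a b)
  have hs2 : Group.IsSolvable (MulAut N) := Group.isSolvable_of_comm (fun a b => by
    apply (IsCyclic.mulAutMulEquiv N).injective
    rw [map_mul, map_mul, mul_comm])
  refine Group.isSolvable_of_ker_le_range N.subtype (MulAut.conjNormal : G →* MulAut N) ?_
  intro g hg
  rw [MonoidHom.mem_ker] at hg
  rw [Subgroup.range_subtype]
  have hcomm : ∀ n ∈ N, g * n = n * g := by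
    intro n hn
    have := congrArg (fun e : MulAut N => (e ⟨n, hn⟩ : G)) hg
    simp only [MulAut.conjNormal_apply, MulAut.one_apply] at this
    exact mul_inv_eq_iff_eq_mul.mp this
  obtain ⟨⟨n, hn⟩, hnx⟩ := MulAction.exists_smul_eq N x0 (g • x0)
  change n • x0 = g • x0 at hnx
  have : g = n := by
    apply FaithfulSMul.eq_of_smul_eq_smul (α := X)
    intro w
    obtain ⟨⟨b, hb⟩, rfl⟩ := MulAction.exists_smul_eq N x0 w
    change g • b • x0 = n • b • x0
    have hnb : n * b = b * n := by
      let := IsCyclic.commGroup (α := N)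
      exact congrArg Subtype.val (mul_comm (⟨n, hn⟩ : N) ⟨b, hb⟩)
    rw [smul_smul, smul_smul, hcomm b hb, hnb, mul_smul, mul_smul, hnx]
  exact this ▸ hn

theorem gc_rad_iff {K E : Type*} [Field K] [Field E] [Algebra K E] {x : E} :
    IsSolvableByRad K x ↔ x ∈ solvableByRad K E := by
  constructor
  · intro h
    induction h with
    | base a => exact _root_.algebraMap_mem _ a
    | add a b _ _ ha hb => exact add_mem ha hb
    | neg a _ ha => exact neg_mem ha
    | mul a b _ _ ha hb => exact mul_mem ha hb
    | inv a _ ha => exact inv_mem ha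
    | rad a n hn _ ha => exact solvableByRad.rad_mem hn ha
  · intro h
    induction h using solvableByRad.induction with
    | mem a => exact .base a
    | add a b _ _ ha hb => exact .add a b ha hb
    | mul a b _ _ ha hb => exact .mul a b ha hb
    | rad n a hn _ ha => exact .rad a n hn ha

theorem gc_radclosed {S E : Type*} [Field S] [CharZero S] [Field E] [Algebra S E]
    [FiniteDimensional S E] [IsGalois S E]
    (hsplit : ∀ n : ℕ, n ≠ 0 → ∀ a : S, (X ^ n - C a : S[X]).Splits)
    (hprim : ∀ n : ℕ, n ≠ 0 → (primitiveRoots n S).Nonempty)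
    (hG : Group.IsSolvable Gal(E/S)) : Subsingleton Gal(E/S) := by
  by_contra hnt
  rw [not_subsingleton_iff_nontrivial] at hnt
  have hlt := Group.IsSolvable.commutator_lt_top_of_nontrivial Gal(E/S)
  obtain ⟨N, hN, hle⟩ := (eq_top_or_exists_le_coatom (commutator Gal(E/S))).resolve_left hlt.ne
  have hNn : N.Normal := Subgroup.Normal.of_commutator_le _ hle
  have hcycq : IsCyclic (Gal(E/S) ⧸ N) := by
    obtain ⟨g, hg⟩ : ∃ g, g ∉ N := by
      by_contra h
      push Not at h
      exact hN.1 (eq_top_iff.mpr fun g _ => h g)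
    have htop : N ⊔ Subgroup.zpowers g = ⊤ := by
      apply hN.2
      refine lt_of_le_of_ne le_sup_left ?_
      intro h
      apply hg
      rw [h]
      exact Subgroup.mem_sup_right (Subgroup.mem_zpowers g)
    rw [isCyclic_iff_exists_zpowers_eq_top]
    refine ⟨(QuotientGroup.mk' N g), ?_⟩
    have := congrArg (Subgroup.map (QuotientGroup.mk' N)) htop
    rw [Subgroup.map_sup, MonoidHom.map_zpowers, QuotientGroup.map_mk'_self, bot_sup_eq,
      ← MonoidHom.range_eq_map, MonoidHom.range_eq_top.mpr (QuotientGroup.mk'_surjective N)] at this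
    exact this
  let F := IntermediateField.fixedField N
  have : IsGalois S F := IsGalois.of_fixedField_normal_subgroup N
  have : IsCyclic Gal(F/S) :=
    isCyclic_of_surjective (IsGalois.normalAutEquivQuotient N) (MulEquiv.surjective _)
  obtain ⟨α, ⟨a, ha⟩, hα⟩ := exists_root_adjoin_eq_top_of_isCyclic S F
    (hprim _ (Module.finrank_pos (R := S) (M := F)).ne')
  have hn := (Module.finrank_pos (R := S) (M := F)).ne'
  have hmem : α ∈ (algebraMap S F).range := by
    refine Polynomial.Splits.mem_range_of_isRoot (hsplit _ hn a) ?_ ?_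
    · exact X_pow_sub_C_ne_zero (Nat.pos_of_ne_zero hn) a
    · simp [ha]
  have hbot : (⊤ : IntermediateField S F) = ⊥ := by
    rw [← hα, IntermediateField.adjoin_simple_eq_bot_iff, IntermediateField.mem_bot]
    exact hmem
  have hF : F = ⊥ := by
    rw [eq_bot_iff]
    intro w hw
    have hw' : (⟨w, hw⟩ : F) ∈ (⊥ : IntermediateField S F) := by rw [← hbot]; trivial
    rw [IntermediateField.mem_bot] at hw' ⊢
    obtain ⟨s, hs⟩ := hw'
    exact ⟨s, congrArg Subtype.val hs⟩
  apply hN.1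
  rw [← IntermediateField.fixingSubgroup_fixedField N]
  change F.fixingSubgroup = ⊤
  rw [hF, IntermediateField.fixingSubgroup_bot]

theorem gc_sol_to_rad {K : Type*} [Field K] [CharZero K] (f : K[X]) (hf : f ≠ 0)
    (hG : Group.IsSolvable f.Gal) (z : AlgebraicClosure K)
    (hz : z ∈ f.rootSet (AlgebraicClosure K)) : z ∈ solvableByRad K (AlgebraicClosure K) := by
  let Ω := AlgebraicClosure K
  let S := solvableByRad K Ω
  let g : S[X] := f.map (algebraMap K S)
  let E := g.SplittingField
  have hFact : Fact ((f.map (algebraMap K E)).Splits) := ⟨by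
    have := SplittingField.splits g
    rwa [Polynomial.map_map, ← IsScalarTower.algebraMap_eq] at this⟩
  let φ : Gal(E/S) →* f.Gal := (Gal.restrict f E).comp (AlgEquiv.restrictScalarsHom K)
  have hφ : Function.Injective φ := by
    rw [injective_iff_map_eq_one]
    intro σ hσ
    apply Gal.ext (p := g)
    intro x hx
    have hx' : x ∈ f.rootSet E := by
      rw [mem_rootSet] at hx ⊢
      refine ⟨hf, ?_⟩
      have := hx.2
      rwa [aeval_map_algebraMap] at this
    have := Gal.restrict_smul (p := f) (AlgEquiv.restrictScalarsHom K σ) ⟨x, hx'⟩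
    change ((φ σ • (⟨x, hx'⟩ : f.rootSet E) : f.rootSet E) : E) = σ x at this
    rw [hσ, one_smul] at this
    exact this.symm
  have hgal : IsGalois S E := isGalois_iff.mpr ⟨inferInstance, inferInstance⟩
  have hsol : Group.IsSolvable Gal(E/S) := Group.isSolvable_of_isSolvable_injective hφ
  have hclosed : ∀ n : ℕ, n ≠ 0 → ∀ w : Ω, w ^ n ∈ S → w ∈ S :=
    fun n hn w hw => solvableByRad.rad_mem hn hw
  have hss : Subsingleton Gal(E/S) := by
    refine gc_radclosed ?_ ?_ hsol
    · intro n hn a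
      refine Splits.of_splits_map (algebraMap S Ω) (IsAlgClosed.splits _) ?_
      intro w hw
      have hw2 := isRoot_of_mem_roots hw
      have hw3 : w ^ n = (a : Ω) := by
        have : w ^ n - (a : Ω) = 0 := by simpa using hw2
        exact sub_eq_zero.mp this
      exact ⟨⟨w, hclosed n hn w (by rw [hw3]; exact a.2)⟩, rfl⟩
    · intro n hn
      have : NeZero (n : Ω) := ⟨Nat.cast_ne_zero.mpr hn⟩
      have : NeZero n := ⟨hn⟩
      obtain ⟨ζ, hζ⟩ := HasEnoughRootsOfUnity.exists_primitiveRoot Ω n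
      have hζS : ζ ∈ S := hclosed n hn ζ (by rw [hζ.pow_eq_one]; exact one_mem S)
      refine ⟨⟨ζ, hζS⟩, ?_⟩
      rw [mem_primitiveRoots (Nat.pos_of_ne_zero hn)]
      exact IsPrimitiveRoot.of_map_of_injective (f := algebraMap S Ω) hζ
        (algebraMap S Ω).injective
  have hgs : g.Splits := by
    rw [IsSplittingField.splits_iff E g, eq_comm, eq_top_iff]
    intro w _
    rw [Algebra.mem_bot]
    exact (IsGalois.mem_range_algebraMap_iff_fixed w).mpr
      (fun σ => by rw [Subsingleton.elim σ 1]; rfl)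
  have hg0 : g ≠ 0 := by simpa [g] using hf
  obtain ⟨s, hs⟩ := hgs.mem_range_of_isRoot hg0 (i := algebraMap S Ω) (x := z) (by
    rw [mem_rootSet] at hz
    rw [Polynomial.map_map, ← IsScalarTower.algebraMap_eq, IsRoot.def, eval_map_algebraMap]
    exact hz.2)
  rw [← hs]
  exact s.2

/-- **Galois's criterion of solvability for irreducible equations of prime degree.**
Let `K` be a field of characteristic zero and `f ∈ K[X]` irreducible of prime degree `p`.
Working inside an algebraic closure of `K`, where the splitting field `L` of `f` is the
field generated over `K` by all roots of `f`: `f` is solvable by radicals if and only if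
for every pair of distinct roots `x, y` of `f` one has `L = K(x, y)`. -/
theorem galois_criterion_prime_degree {K : Type*} [Field K] [CharZero K]
    (p : ℕ) (hp : p.Prime) (f : Polynomial K) (hirr : Irreducible f)
    (hdeg : f.natDegree = p) :
    (∀ α ∈ f.rootSet (AlgebraicClosure K), IsSolvableByRad K α) ↔
    (∀ x ∈ f.rootSet (AlgebraicClosure K), ∀ y ∈ f.rootSet (AlgebraicClosure K), x ≠ y →
      IntermediateField.adjoin K {x, y} =
        IntermediateField.adjoin K (f.rootSet (AlgebraicClosure K))) := by
  have hfact : Fact ((f.map (algebraMap K (AlgebraicClosure K))).Splits) := ⟨IsAlgClosed.splits _⟩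
  have hgal : IsGalois K (AlgebraicClosure K) := isGalois_iff.mpr ⟨inferInstance, inferInstance⟩
  have htrans := Gal.galAction_isPretransitive f (AlgebraicClosure K) hirr
  have hfaith : FaithfulSMul f.Gal (f.rootSet (AlgebraicClosure K)) := by
    refine ⟨fun {a b} h => ?_⟩
    apply Gal.galActionHom_injective f (AlgebraicClosure K)
    exact Equiv.ext h
  have hcard : Nat.card (f.rootSet (AlgebraicClosure K)) = p := by
    rw [Nat.card_eq_fintype_card, card_rootSet_eq_natDegree hirr.separable hfact.1, hdeg]
  have hprime : (Nat.card (f.rootSet (AlgebraicClosure K))).Prime := hcard ▸ hp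
  have hfin : Finite f.Gal := inferInstance
  have h1 : (∀ α ∈ f.rootSet (AlgebraicClosure K), IsSolvableByRad K α) ↔
      Group.IsSolvable f.Gal := by
    constructor
    · intro h
      have hne : Nonempty (f.rootSet (AlgebraicClosure K)) :=
        (Nat.card_ne_zero.mp hprime.ne_zero).1
      obtain ⟨α, hα⟩ := hne
      exact isSolvable_gal_of_irreducible (gc_rad_iff.mp (h α hα)) hirr (mem_rootSet.mp hα).2
    · intro h α hα
      exact gc_rad_iff.mpr (gc_sol_to_rad f hirr.ne_zero h α hα)
  rw [h1]
  constructor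
  · intro hsol x hx y hy hxy
    apply le_antisymm
    · apply IntermediateField.adjoin.mono
      rintro w (rfl | rfl)
      · exact hx
      · exact hy
    · rw [IntermediateField.adjoin_le_iff]
      intro z hz
      rw [← InfiniteGalois.fixedField_fixingSubgroup (IntermediateField.adjoin K {x, y})]
      rintro ⟨σ, hσ⟩
      rw [IntermediateField.mem_fixingSubgroup_iff] at hσ
      have hg := gc_groupA hprime hsol ⟨x, hx⟩ ⟨y, hy⟩ (fun h => hxy (congrArg Subtype.val h))
        (Gal.restrict f (AlgebraicClosure K) σ)
        (Subtype.ext (by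
          rw [Gal.restrict_smul]
          exact hσ x (IntermediateField.subset_adjoin _ _ (by simp))))
        (Subtype.ext (by
          rw [Gal.restrict_smul]
          exact hσ y (IntermediateField.subset_adjoin _ _ (by simp))))
      have := Gal.restrict_smul (p := f) σ ⟨z, hz⟩
      rw [hg, one_smul] at this
      exact this.symm
  · intro H
    refine gc_groupB hprime ?_
    rintro ⟨x, hx⟩ ⟨y, hy⟩ hxy g hgx hgy
    obtain ⟨σ, rfl⟩ := Gal.restrict_surjective f (AlgebraicClosure K) g
    have hadj := H x hx y hy (fun h => hxy (Subtype.ext h))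
    have hsx : σ x = x := by
      rw [← Gal.restrict_smul (p := f) σ ⟨x, hx⟩, hgx]
    have hsy : σ y = y := by
      rw [← Gal.restrict_smul (p := f) σ ⟨y, hy⟩, hgy]
    have hle : IntermediateField.adjoin K {x, y} ≤
        IntermediateField.fixedField (Subgroup.zpowers σ) := by
      rw [IntermediateField.adjoin_le_iff]
      have key : ∀ w, σ w = w → w ∈ IntermediateField.fixedField (Subgroup.zpowers σ) := by
        intro w hw
        rintro ⟨τ, hτ⟩
        have : Subgroup.zpowers σ ≤ MulAction.stabilizer _ w := by
          rw [Subgroup.zpowers_le]; exact hw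
        exact this hτ
      rintro w (rfl | rfl)
      · exact key _ hsx
      · exact key _ hsy
    apply FaithfulSMul.eq_of_smul_eq_smul (α := f.rootSet (AlgebraicClosure K))
    rintro ⟨z, hz⟩
    apply Subtype.ext
    rw [Gal.restrict_smul, one_smul]
    have hzm : z ∈ IntermediateField.adjoin K {x, y} := by
      rw [hadj]; exact IntermediateField.subset_adjoin _ _ hz
    exact hle hzm ⟨σ, Subgroup.mem_zpowers σ⟩
end

section
/- Let f : ℝ → ℝ be 2π-periodic and of bounded variation on [−π, π], and let x ∈ ℝ. Then the one-sided limits f(x⁺) and f(x⁻) exist, and the partial sums S_N(f)(x) = Σ_{|k| ≤ N} c_k e^{ikx} of the Fourier series of f converge, as N → ∞, to (f(x⁺) + f(x⁻))/2 (Jordan's test, extending Dirichlet's condition for the convergence of Fourier series to functions of bounded variation). -/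
open Filter Topology

/-- Dirichlet kernel. -/
noncomputable def jDk (N : ℕ) (t : ℝ) : ℝ :=
  1 + 2 * ∑ k ∈ Finset.range N, Real.cos (((k : ℝ) + 1) * t)

lemma jDk_continuous (N : ℕ) : Continuous (jDk N) := by
  unfold jDk; fun_prop

lemma jDk_abs_le (N : ℕ) (t : ℝ) : |jDk N t| ≤ 2 * N + 1 := by
  unfold jDk
  have h : |∑ k ∈ Finset.range N, Real.cos (((k : ℝ) + 1) * t)| ≤ N := by
    refine (Finset.abs_sum_le_sum_abs _ _).trans ?_
    refine (Finset.sum_le_sum (fun k _ => Real.abs_cos_le_one _)).trans ?_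
    simp
  rw [abs_le] at *
  constructor <;> linarith

lemma jDk_neg (N : ℕ) (t : ℝ) : jDk N (-t) = jDk N t := by
  simp [jDk]

lemma jDk_integral (N : ℕ) : ∫ t in (0:ℝ)..Real.pi, jDk N t = Real.pi := by
  unfold jDk
  rw [intervalIntegral.integral_add (by simp) (Continuous.intervalIntegrable (by fun_prop) _ _),
    intervalIntegral.integral_const_mul, intervalIntegral.integral_finsetSum
      (fun k _ => Continuous.intervalIntegrable (by fun_prop) _ _)]
  rw [Finset.sum_eq_zero]
  · simp
  · intro k _
    have hk : ((k : ℝ) + 1) ≠ 0 := by positivity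
    rw [intervalIntegral.integral_comp_mul_left (fun u => Real.cos u) hk, integral_cos]
    have : Real.sin (((k : ℝ) + 1) * Real.pi) = 0 := by
      have := Real.sin_nat_mul_pi (k + 1)
      push_cast at this; exact this
    simp [this]

lemma jDk_mul_sin (N : ℕ) (t : ℝ) :
    jDk N t * Real.sin (t / 2) = Real.sin (((N : ℝ) + 1 / 2) * t) := by
  induction N with
  | zero => simp [jDk]; ring_nf
  | succ n ih =>
    have : jDk (n + 1) t = jDk n t + 2 * Real.cos (((n : ℝ) + 1) * t) := by
      simp [jDk, Finset.sum_range_succ]; ring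
    rw [this, add_mul, ih]
    have e1 : ((n : ℝ) + 1 / 2) * t = ((n : ℝ) + 1) * t - t / 2 := by ring
    have e2 : (((n + 1 : ℕ) : ℝ) + 1 / 2) * t = ((n : ℝ) + 1) * t + t / 2 := by
      push_cast; ring
    rw [e1, e2, Real.sin_sub, Real.sin_add]; ring

lemma jDk_tail (N : ℕ) (c : ℝ) (hc : 0 < c) (hcp : c ≤ Real.pi) :
    |∫ t in c..Real.pi, jDk N t| ≤ 2 / (((N : ℝ) + 1 / 2) * Real.sin (c / 2)) := by
  set n : ℝ := (N : ℝ) + 1 / 2 with hn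
  have hn0 : 0 < n := by positivity
  have hs : ∀ t ∈ Set.uIcc c Real.pi, 0 < Real.sin (t / 2) := by
    intro t ht
    rw [Set.uIcc_of_le hcp] at ht
    exact Real.sin_pos_of_pos_of_lt_pi (by linarith [ht.1]) (by linarith [ht.2, Real.pi_pos])
  let H : ℝ → ℝ := fun t => - Real.cos (n * t) / (n * Real.sin (t / 2))
  let B : ℝ → ℝ := fun t => - 1 / (n * Real.sin (t / 2))
  let r : ℝ → ℝ := fun t => Real.cos (n * t) * Real.cos (t / 2) / (2 * n * Real.sin (t / 2) ^ 2)
  let B' : ℝ → ℝ := fun t => Real.cos (t / 2) / (2 * n * Real.sin (t / 2) ^ 2)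
  have hsd : ∀ t : ℝ, HasDerivAt (fun t => n * Real.sin (t / 2)) (n * (Real.cos (t / 2) * (1 / 2))) t :=
    fun t => (((hasDerivAt_id t).div_const 2).sin).const_mul n
  have hH : ∀ t ∈ Set.uIcc c Real.pi, HasDerivAt H (jDk N t + r t) t := by
    intro t ht
    have h0 := hs t ht
    have hcos : HasDerivAt (fun t => - Real.cos (n * t)) (- (- Real.sin (n * t) * (n * 1))) t :=
      (((hasDerivAt_id t).const_mul n).cos).neg
    have := hcos.div (hsd t) (by positivity)
    refine HasDerivAt.congr_deriv (f := H) this ?_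
    have hm := jDk_mul_sin N t
    rw [← hn] at hm
    rw [← hm]
    simp only [r]
    field_simp
    ring
  have hB : ∀ t ∈ Set.uIcc c Real.pi, HasDerivAt B (B' t) t := by
    intro t ht
    have h0 := hs t ht
    have := (hasDerivAt_const t (-1 : ℝ)).div (hsd t) (by positivity)
    refine HasDerivAt.congr_deriv (f := B) this ?_
    simp only [B']
    field_simp
    ring
  have hrc : ContinuousOn r (Set.uIcc c Real.pi) := by
    refine ContinuousOn.div (by fun_prop) (by fun_prop) ?_
    intro t ht; have := hs t ht; positivity
  have hBc : ContinuousOn B' (Set.uIcc c Real.pi) := by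
    refine ContinuousOn.div (by fun_prop) (by fun_prop) ?_
    intro t ht; have := hs t ht; positivity
  have hri := hrc.intervalIntegrable (μ := MeasureTheory.volume)
  have hBi := hBc.intervalIntegrable (μ := MeasureTheory.volume)
  have hDi := (jDk_continuous N).intervalIntegrable (μ := MeasureTheory.volume) c Real.pi
  have I1 := intervalIntegral.integral_eq_sub_of_hasDerivAt hH (hDi.add hri)
  have I2 := intervalIntegral.integral_eq_sub_of_hasDerivAt hB hBi
  rw [intervalIntegral.integral_add hDi hri] at I1
  have I3 : ‖∫ t in c..Real.pi, r t‖ ≤ ∫ t in c..Real.pi, B' t := by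
    refine intervalIntegral.norm_integral_le_of_norm_le hcp ?_ hBi
    refine Filter.Eventually.of_forall fun t ht => ?_
    have ht' : t ∈ Set.uIcc c Real.pi := by
      rw [Set.uIcc_of_le hcp]; exact ⟨ht.1.le, ht.2⟩
    have h0 := hs t ht'
    have hc0 : 0 ≤ Real.cos (t / 2) :=
      Real.cos_nonneg_of_mem_Icc ⟨by linarith [ht.1, Real.pi_pos], by linarith [ht.2]⟩
    simp only [r, B', Real.norm_eq_abs]
    rw [abs_div, abs_mul, abs_of_nonneg hc0, abs_of_pos (by positivity : 0 < 2 * n * Real.sin (t / 2) ^ 2)]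
    gcongr
    exact mul_le_of_le_one_left hc0 (Real.abs_cos_le_one _)
  have hsc := hs c Set.left_mem_uIcc
  have hHb : ∀ t ∈ Set.uIcc c Real.pi, |H t| ≤ 1 / (n * Real.sin (t / 2)) := by
    intro t ht
    have h0 := hs t ht
    simp only [H]
    rw [abs_div, abs_neg, abs_of_pos (by positivity : 0 < n * Real.sin (t / 2))]
    gcongr
    exact Real.abs_cos_le_one _
  have h1 := hHb c Set.left_mem_uIcc
  have h2 := hHb Real.pi Set.right_mem_uIcc
  rw [I2] at I3
  have hBc : B c = - (1 / (n * Real.sin (c / 2))) := by simp only [B]; ring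
  have hBp : B Real.pi = - (1 / (n * Real.sin (Real.pi / 2))) := by simp only [B]; ring
  rw [hBc, hBp] at I3
  rw [Real.norm_eq_abs] at I3
  have e : 2 / (n * Real.sin (c / 2)) = 2 * (1 / (n * Real.sin (c / 2))) := by ring
  rw [e]
  rw [abs_le] at *
  constructor <;> linarith [h1.1, h1.2, h2.1, h2.2, I3.1, I3.2]

lemma jDk_tail_bound (N : ℕ) (c : ℝ) (hc : 0 < c) (hcp : c ≤ Real.pi) :
    |∫ t in c..Real.pi, jDk N t| ≤ 10 := by
  have hn0 : (0 : ℝ) < (N : ℝ) + 1 / 2 := by positivity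
  have hpi := Real.pi_lt_four
  rcases le_total (((N : ℝ) + 1 / 2) * c) 1 with h | h
  · have h1 := intervalIntegral.integral_add_adjacent_intervals
      ((jDk_continuous N).intervalIntegrable (μ := MeasureTheory.volume) 0 c)
      ((jDk_continuous N).intervalIntegrable (μ := MeasureTheory.volume) c Real.pi)
    rw [jDk_integral] at h1
    have h2 : ‖∫ t in (0:ℝ)..c, jDk N t‖ ≤ (2 * N + 1) * |c - 0| :=
      intervalIntegral.norm_integral_le_of_norm_le_const (fun t _ => jDk_abs_le N t)
    rw [sub_zero, abs_of_pos hc, Real.norm_eq_abs, abs_le] at h2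
    rw [abs_le]
    constructor <;> linarith [h2.1, h2.2, Real.pi_pos]
  · refine (jDk_tail N c hc hcp).trans ?_
    have h1 := Real.mul_le_sin (x := c / 2) (by linarith) (by linarith)
    have h2 : 1 / 4 * c ≤ Real.sin (c / 2) := by
      refine le_trans ?_ h1
      rw [show 2 / Real.pi * (c / 2) = 1 / Real.pi * c by ring]
      gcongr
    rw [div_le_iff₀ (by have : 0 < Real.sin (c/2) := by linarith
                        positivity)]
    nlinarith

lemma jDk_tail_tendsto (c : ℝ) (hc : 0 < c) (hcp : c ≤ Real.pi) :
    Tendsto (fun N : ℕ => ∫ t in c..Real.pi, jDk N t) atTop (𝓝 0) := by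
  refine squeeze_zero_norm (fun N => jDk_tail N c hc hcp) ?_
  have hs : 0 < Real.sin (c / 2) :=
    Real.sin_pos_of_pos_of_lt_pi (by linarith) (by linarith [Real.pi_pos])
  refine Tendsto.const_div_atTop ?_ _
  refine Tendsto.atTop_mul_const hs ?_
  exact tendsto_atTop_add_const_right _ _ tendsto_natCast_atTop_atTop

/-- The core: a monotone function tested against the Dirichlet kernel. -/
lemma jDk_monotone (p : ℝ → ℝ) (hp : Monotone p) (L : ℝ)
    (hL : Tendsto p (𝓝[>] 0) (𝓝 L)) :
    Tendsto (fun N : ℕ => ∫ t in (0:ℝ)..Real.pi, p t * jDk N t) atTop (𝓝 (Real.pi * L)) := by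
  have hpi := Real.pi_pos
  have hge : ∀ t, 0 < t → L ≤ p t := by
    intro t ht
    refine le_of_tendsto hL ?_
    filter_upwards [Ioo_mem_nhdsGT ht] with u hu using hp hu.2.le
  set M : ℝ := p Real.pi - L with hM
  have hM0 : 0 ≤ M := by linarith [hge _ hpi]
  let G : ℕ → ℝ → ℝ := fun N s =>
    ∫ t in Set.Ioc 0 Real.pi, if s < p t - L then jDk N t else 0
  -- the layer-cake identity
  have hFub : ∀ N : ℕ, ∫ t in (0:ℝ)..Real.pi, (p t - L) * jDk N t = ∫ s in Set.Ioc 0 M, G N s := by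
    intro N
    rw [intervalIntegral.integral_of_le hpi.le]
    simp only [G]
    rw [MeasureTheory.integral_integral_swap]
    · refine MeasureTheory.setIntegral_congr_fun measurableSet_Ioc ?_
      intro t ht
      have h0 : 0 ≤ p t - L := by linarith [hge t ht.1]
      have h1 : p t - L ≤ M := by linarith [hp ht.2]
      have : (fun s : ℝ => if s < p t - L then jDk N t else 0)
          = (Set.Iio (p t - L)).indicator (fun _ => jDk N t) := by
        ext s; simp [Set.indicator_apply]
      simp only [this]
      rw [MeasureTheory.integral_indicator measurableSet_Iio,
        MeasureTheory.Measure.restrict_restrict measurableSet_Iio]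
      have e : Set.Iio (p t - L) ∩ Set.Ioc 0 M = Set.Ioo 0 (p t - L) := by
        ext s; simp only [Set.mem_inter_iff, Set.mem_Iio, Set.mem_Ioc, Set.mem_Ioo]
        constructor
        · rintro ⟨a, b, c⟩; exact ⟨b, a⟩
        · rintro ⟨a, b⟩; exact ⟨b, a, by linarith⟩
      rw [e]
      simp [h0]
    · refine MeasureTheory.Integrable.of_bound (C := 2 * N + 1) ?_ ?_
      · refine Measurable.aestronglyMeasurable ?_
        refine Measurable.ite ?_ ((jDk_continuous N).measurable.comp measurable_snd) measurable_const
        exact measurableSet_lt measurable_fst ((hp.measurable.comp measurable_snd).sub_const L)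
      · refine Filter.Eventually.of_forall fun z => ?_
        simp only [Function.uncurry]
        split_ifs
        · exact jDk_abs_le N _
        · simp; positivity
  -- the inner integrals are tails
  have hG : ∀ s, 0 < s → s < M → ∃ c, 0 < c ∧ c ≤ Real.pi ∧
      ∀ N, G N s = ∫ t in c..Real.pi, jDk N t := by
    intro s hs hsM
    obtain ⟨d, hd, hdl⟩ : ∃ d, 0 < d ∧ ∀ t, 0 < t → t < d → p t - L < s := by
      have : ∀ᶠ t in 𝓝[>] (0:ℝ), p t < L + s := hL.eventually_lt_const (by linarith)
      rw [eventually_nhdsWithin_iff, Metric.eventually_nhds_iff] at this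
      obtain ⟨d, hd, h⟩ := this
      refine ⟨d, hd, fun t ht htd => ?_⟩
      have := h (y := t) (by rw [Real.dist_eq, sub_zero, abs_of_pos ht]; exact htd) ht
      linarith
    let S : Set ℝ := {t | s < p t - L ∧ 0 < t}
    have hSpi : Real.pi ∈ S := ⟨hsM, hpi⟩
    have hSb : ∀ t ∈ S, d ≤ t := by
      rintro t ⟨h1, h2⟩
      by_contra! h
      linarith [hdl t h2 h]
    have hSbd : BddBelow S := ⟨d, hSb⟩
    have hc : d ≤ sInf S := le_csInf ⟨_, hSpi⟩ hSb
    refine ⟨sInf S, lt_of_lt_of_le hd hc, csInf_le hSbd hSpi, fun N => ?_⟩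
    rw [intervalIntegral.integral_of_le (csInf_le hSbd hSpi)]
    have e : Set.Ioc (sInf S) Real.pi = Set.Ioi (sInf S) ∩ Set.Ioc 0 Real.pi := by
      ext t; simp only [Set.mem_inter_iff, Set.mem_Ioi, Set.mem_Ioc]
      constructor
      · rintro ⟨a, b⟩; exact ⟨a, by linarith, b⟩
      · rintro ⟨a, b, c⟩; exact ⟨a, c⟩
    rw [e, ← MeasureTheory.Measure.restrict_restrict measurableSet_Ioi,
      ← MeasureTheory.integral_indicator measurableSet_Ioi]
    simp only [G]
    refine MeasureTheory.integral_congr_ae ?_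
    have hne : ∀ᵐ t ∂(MeasureTheory.volume.restrict (Set.Ioc 0 Real.pi)), t ≠ sInf S :=
      MeasureTheory.Measure.ae_ne _ _
    filter_upwards [hne, MeasureTheory.ae_restrict_mem measurableSet_Ioc] with t ht htm
    rw [Set.indicator_apply]
    have : s < p t - L ↔ t ∈ Set.Ioi (sInf S) := by
      constructor
      · intro h
        exact lt_of_le_of_ne (csInf_le hSbd ⟨h, htm.1⟩) (Ne.symm ht)
      · intro h
        obtain ⟨u, hu, hut⟩ := exists_lt_of_csInf_lt ⟨_, hSpi⟩ h
        linarith [hp hut.le, hu.1]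
    simp only [this]
  have hlim : Tendsto (fun N : ℕ => ∫ s in Set.Ioc 0 M, G N s) atTop (𝓝 0) := by
    have hae : ∀ᵐ s ∂(MeasureTheory.volume.restrict (Set.Ioc 0 M)), 0 < s ∧ s < M := by
      have hne : ∀ᵐ s ∂(MeasureTheory.volume.restrict (Set.Ioc 0 M)), s ≠ M :=
        MeasureTheory.Measure.ae_ne _ _
      filter_upwards [hne, MeasureTheory.ae_restrict_mem measurableSet_Ioc] with s h1 h2
      exact ⟨h2.1, lt_of_le_of_ne h2.2 h1⟩
    have := MeasureTheory.tendsto_integral_of_dominated_convergence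
      (μ := MeasureTheory.volume.restrict (Set.Ioc 0 M)) (F := G) (f := fun _ => (0:ℝ))
      (fun _ => (10:ℝ)) ?_ (MeasureTheory.integrable_const _) ?_ ?_
    · simpa using this
    · intro N
      have hmeas : Measurable (fun z : ℝ × ℝ => if z.1 < p z.2 - L then jDk N z.2 else 0) := by
        refine Measurable.ite ?_ ((jDk_continuous N).measurable.comp measurable_snd) measurable_const
        exact measurableSet_lt measurable_fst ((hp.measurable.comp measurable_snd).sub_const L)
      exact (hmeas.stronglyMeasurable.integral_prod_right
        (ν := MeasureTheory.volume.restrict (Set.Ioc 0 Real.pi))).aestronglyMeasurable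
    · intro N
      filter_upwards [hae] with s hs
      obtain ⟨c, h1, h2, h3⟩ := hG s hs.1 hs.2
      rw [h3]
      exact jDk_tail_bound N c h1 h2
    · filter_upwards [hae] with s hs
      obtain ⟨c, h1, h2, h3⟩ := hG s hs.1 hs.2
      simp only [h3]
      exact jDk_tail_tendsto c h1 h2
  have hfin : ∀ N : ℕ, ∫ t in (0:ℝ)..Real.pi, p t * jDk N t
      = (∫ s in Set.Ioc 0 M, G N s) + Real.pi * L := by
    intro N
    rw [← hFub N]
    have i1 : IntervalIntegrable (fun t => p t * jDk N t) MeasureTheory.volume 0 Real.pi :=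
      (hp.intervalIntegrable).mul_continuousOn (jDk_continuous N).continuousOn
    have i2 : IntervalIntegrable (fun t => L * jDk N t) MeasureTheory.volume 0 Real.pi :=
      ((jDk_continuous N).const_mul L).intervalIntegrable _ _
    simp only [sub_mul]
    rw [intervalIntegral.integral_sub i1 i2, intervalIntegral.integral_const_mul, jDk_integral]
    ring
  simp only [hfin]
  simpa using hlim.add_const (Real.pi * L)

lemma j_locallyBV (f : ℝ → ℝ) (hper : Function.Periodic f (2 * Real.pi))
    (hbv : BoundedVariationOn f (Set.Icc (-Real.pi) Real.pi)) :
    LocallyBoundedVariationOn f Set.univ := by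
  intro a b _ _
  have hpi := Real.pi_pos
  obtain ⟨m, hm⟩ := exists_nat_gt (max |a| |b|)
  let I : ℕ → ℝ := fun i => -Real.pi + 2 * Real.pi * ((i : ℝ) - m)
  have hI : Monotone I := by
    intro i j hij
    have : (i : ℝ) ≤ j := by exact_mod_cast hij
    simp only [I]
    gcongr
  have hbv' : BoundedVariationOn f (Set.Icc (I 0) (I (2 * m + 1))) := by
    unfold BoundedVariationOn
    rw [← eVariationOn.sum' f hI]
    refine ENNReal.sum_ne_top.2 fun i _ => ?_
    refine ne_top_of_le_ne_top hbv ?_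
    let φ : ℝ → ℝ := fun t => t - ((i : ℤ) - (m : ℤ) : ℤ) * (2 * Real.pi)
    have hφ : f ∘ φ = f := by
      ext t
      exact hper.sub_int_mul_eq _
    have := eVariationOn.comp_le_of_monotoneOn f (s := Set.Icc (-Real.pi) Real.pi)
      (t := Set.Icc (I i) (I (i + 1))) φ ?_ ?_
    · rwa [hφ] at this
    · intro u _ v _ huv
      simp only [φ]; linarith
    · rintro t ⟨h1, h2⟩
      simp only [I, φ] at *
      push_cast at *
      constructor <;> nlinarith
  refine hbv'.mono ?_
  rintro t ⟨-, h1, h2⟩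
  have ha := (abs_le.1 ((le_max_left |a| |b|).trans hm.le)).1
  have hb := (abs_le.1 ((le_max_right |a| |b|).trans hm.le)).2
  have h3 := Real.pi_gt_three
  have hm0 : (0:ℝ) ≤ m := by positivity
  constructor
  · simp only [I]; push_cast; nlinarith
  · simp only [I]; push_cast; nlinarith

lemma j_sum_exp (N : ℕ) (t : ℝ) :
    ∑ k ∈ Finset.Icc (-(N : ℤ)) (N : ℤ), Complex.exp (Complex.I * (k : ℂ) * (t : ℂ))
      = (jDk N t : ℂ) := by
  induction N with
  | zero => simp [jDk]
  | succ n ih =>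
    have e : Finset.Icc (-((n + 1 : ℕ) : ℤ)) ((n + 1 : ℕ) : ℤ)
        = insert (-((n : ℤ) + 1)) (insert ((n : ℤ) + 1) (Finset.Icc (-(n : ℤ)) (n : ℤ))) := by
      ext k; simp only [Finset.mem_Icc, Finset.mem_insert]; push_cast; omega
    rw [e, Finset.sum_insert (by simp only [Finset.mem_insert, Finset.mem_Icc]; omega),
      Finset.sum_insert (by simp only [Finset.mem_Icc]; omega), ih]
    have : jDk (n + 1) t = jDk n t + 2 * Real.cos (((n : ℝ) + 1) * t) := by
      simp [jDk, Finset.sum_range_succ]; ring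
    rw [this]
    push_cast
    rw [Complex.two_cos]
    ring_nf

lemma j_partial_sum (f : ℝ → ℝ) (hper : Function.Periodic f (2 * Real.pi))
    (hInt : ∀ a b : ℝ, IntervalIntegrable f MeasureTheory.volume a b) (x : ℝ) (N : ℕ) :
    ∑ k ∈ Finset.Icc (-(N : ℤ)) (N : ℤ),
            ((1 / (2 * Real.pi) : ℂ) *
                ∫ t in (-Real.pi)..Real.pi,
                  (f t : ℂ) * Complex.exp (-Complex.I * (k : ℂ) * (t : ℂ))) *
              Complex.exp (Complex.I * (k : ℂ) * (x : ℂ))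
    = ((1 / (2 * Real.pi) * ((∫ t in (0:ℝ)..Real.pi, f (x + t) * jDk N t)
        + ∫ t in (0:ℝ)..Real.pi, f (x - t) * jDk N t) : ℝ) : ℂ) := by
  have hDper : Function.Periodic (jDk N) (2 * Real.pi) := by
    intro t
    simp only [jDk]
    congr 2
    refine Finset.sum_congr rfl fun k _ => ?_
    have := Real.cos_add_nat_mul_two_pi (((k : ℝ) + 1) * t) (k + 1)
    push_cast at this
    rw [← this]; ring_nf
  have hfc : IntervalIntegrable (fun t => (f t : ℂ)) MeasureTheory.volume (-Real.pi) Real.pi :=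
    ⟨(hInt _ _).1.ofReal, (hInt _ _).2.ofReal⟩
  have h1 : ∀ k : ℤ, ((1 / (2 * Real.pi) : ℂ) *
                ∫ t in (-Real.pi)..Real.pi,
                  (f t : ℂ) * Complex.exp (-Complex.I * (k : ℂ) * (t : ℂ))) *
              Complex.exp (Complex.I * (k : ℂ) * (x : ℂ))
      = (1 / (2 * Real.pi) : ℂ) * ∫ t in (-Real.pi)..Real.pi,
          (f t : ℂ) * Complex.exp (Complex.I * (k : ℂ) * ((x - t : ℝ) : ℂ)) := by
    intro k
    rw [mul_assoc, ← intervalIntegral.integral_mul_const]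
    congr 1
    refine intervalIntegral.integral_congr fun t _ => ?_
    rw [mul_assoc, ← Complex.exp_add]
    congr 2
    push_cast; ring
  simp only [h1]
  rw [← Finset.mul_sum, ← intervalIntegral.integral_finsetSum]
  swap
  · intro k _
    exact hfc.mul_continuousOn (Continuous.continuousOn (by fun_prop))
  simp only [← Finset.mul_sum, j_sum_exp]
  have h2 : ∫ t in (-Real.pi)..Real.pi, (f t : ℂ) * (jDk N (x - t) : ℂ)
      = ((∫ t in (-Real.pi)..Real.pi, f t * jDk N (x - t) : ℝ) : ℂ) := by
    rw [← intervalIntegral.integral_ofReal]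
    push_cast; rfl
  rw [h2]
  have h3 : ∫ t in (-Real.pi)..Real.pi, f t * jDk N (x - t)
      = ∫ t in (-Real.pi)..Real.pi, f (x + t) * jDk N t := by
    have hP : Function.Periodic (fun t => f t * jDk N (t - x)) (2 * Real.pi) := by
      intro t
      simp only
      rw [hper t, show t + 2 * Real.pi - x = (t - x) + 2 * Real.pi by ring, hDper]
    have e1 : ∫ t in (-Real.pi)..Real.pi, f t * jDk N (x - t)
        = ∫ t in (-Real.pi)..(-Real.pi + 2 * Real.pi), f t * jDk N (t - x) := by
      rw [show -Real.pi + 2 * Real.pi = Real.pi by ring]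
      refine intervalIntegral.integral_congr fun t _ => ?_
      rw [← jDk_neg N (t - x), neg_sub]
    rw [e1, hP.intervalIntegral_add_eq (-Real.pi) (-Real.pi + x)]
    have e2 := intervalIntegral.integral_comp_add_right (a := -Real.pi) (b := Real.pi)
      (fun t => f t * jDk N (t - x)) x
    simp only [add_sub_cancel_right] at e2
    rw [show -Real.pi + x + 2 * Real.pi = Real.pi + x by ring, ← e2]
    simp only [add_comm]
  have hi : ∀ a b : ℝ, IntervalIntegrable (fun t => f (x + t) * jDk N t) MeasureTheory.volume a b := by
    intro a b
    refine IntervalIntegrable.mul_continuousOn ?_ (jDk_continuous N).continuousOn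
    have := (hInt (x + a) (x + b)).comp_add_left x
    simpa using this
  have h4 : ∫ t in (-Real.pi)..Real.pi, f (x + t) * jDk N t
      = (∫ t in (0:ℝ)..Real.pi, f (x + t) * jDk N t)
        + ∫ t in (0:ℝ)..Real.pi, f (x - t) * jDk N t := by
    rw [← intervalIntegral.integral_add_adjacent_intervals (hi (-Real.pi) 0) (hi 0 Real.pi), add_comm]
    congr 1
    have := intervalIntegral.integral_comp_neg (a := 0) (b := Real.pi) (fun t => f (x + t) * jDk N t)
    simp only [neg_zero, jDk_neg, ← sub_eq_add_neg] at this
    exact this.symm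
  rw [h3, h4]
  push_cast
  ring

theorem jordan_test_fourier (f : ℝ → ℝ)
    (hper : Function.Periodic f (2 * Real.pi))
    (hbv : BoundedVariationOn f (Set.Icc (-Real.pi) Real.pi)) (x : ℝ) :
    ∃ a b : ℝ,
      Tendsto f (nhdsWithin x (Set.Ioi x)) (nhds a) ∧
      Tendsto f (nhdsWithin x (Set.Iio x)) (nhds b) ∧
      Tendsto (fun N : ℕ =>
          ∑ k ∈ Finset.Icc (-(N : ℤ)) (N : ℤ),
            ((1 / (2 * Real.pi) : ℂ) *
                ∫ t in (-Real.pi)..Real.pi,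
                  (f t : ℂ) * Complex.exp (-Complex.I * (k : ℂ) * (t : ℂ))) *
              Complex.exp (Complex.I * (k : ℂ) * (x : ℂ)))
        atTop (nhds (((a + b) / 2 : ℝ) : ℂ)) := by
  obtain ⟨p, q, hp, hq, hf⟩ := (j_locallyBV f hper hbv).exists_monotoneOn_sub_monotoneOn
  rw [monotoneOn_univ] at hp hq
  have hInt : ∀ a b : ℝ, IntervalIntegrable f MeasureTheory.volume a b := by
    intro a b
    rw [hf]
    exact hp.intervalIntegrable.sub hq.intervalIntegrable
  -- translation of one-sided limits
  have tR : Tendsto (fun t : ℝ => x + t) (𝓝[>] 0) (𝓝[>] x) := by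
    refine tendsto_nhdsWithin_of_tendsto_nhds_of_eventually_within _ ?_ ?_
    · have : Tendsto (fun t : ℝ => x + t) (𝓝 0) (𝓝 (x + 0)) :=
        (continuous_const.add continuous_id).tendsto 0
      rw [add_zero] at this
      exact this.mono_left nhdsWithin_le_nhds
    · filter_upwards [self_mem_nhdsWithin] with t ht
      simpa using ht
  have tL : Tendsto (fun t : ℝ => x - t) (𝓝[>] 0) (𝓝[<] x) := by
    refine tendsto_nhdsWithin_of_tendsto_nhds_of_eventually_within _ ?_ ?_
    · have : Tendsto (fun t : ℝ => x - t) (𝓝 0) (𝓝 (x - 0)) :=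
        (continuous_const.sub continuous_id).tendsto 0
      rw [sub_zero] at this
      exact this.mono_left nhdsWithin_le_nhds
    · filter_upwards [self_mem_nhdsWithin] with t ht
      simpa using ht
  have key : ∀ r : ℝ → ℝ, Monotone r →
      Tendsto (fun N : ℕ => (∫ t in (0:ℝ)..Real.pi, r (x + t) * jDk N t)
        + ∫ t in (0:ℝ)..Real.pi, r (x - t) * jDk N t) atTop
        (𝓝 (Real.pi * (Function.rightLim r x + Function.leftLim r x))) := by
    intro r hr
    have h1 := jDk_monotone (fun t => r (x + t)) (fun u v h => hr (by linarith)) _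
      ((hr.tendsto_rightLim x).comp tR)
    have h2 := jDk_monotone (fun t => - r (x - t)) (fun u v h => neg_le_neg (hr (by linarith))) _
      ((hr.tendsto_leftLim x).comp tL).neg
    have h3 := h1.sub h2
    simp only [neg_mul, intervalIntegral.integral_neg, sub_neg_eq_add, mul_neg] at h3
    rw [mul_add]
    exact h3
  refine ⟨Function.rightLim p x - Function.rightLim q x,
    Function.leftLim p x - Function.leftLim q x, ?_, ?_, ?_⟩
  · rw [hf]; exact (hp.tendsto_rightLim x).sub (hq.tendsto_rightLim x)
  · rw [hf]; exact (hp.tendsto_leftLim x).sub (hq.tendsto_leftLim x)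
  simp only [j_partial_sum f hper hInt x]
  refine (Complex.continuous_ofReal.tendsto _).comp ?_
  have hk := ((key p hp).sub (key q hq)).const_mul (1 / (2 * Real.pi))
  have hpi := Real.pi_ne_zero
  convert hk using 2 with N
  · congr 1
    have iR : ∀ r : ℝ → ℝ, Monotone r → IntervalIntegrable (fun t => r (x + t) * jDk N t)
        MeasureTheory.volume 0 Real.pi := fun r hr =>
      IntervalIntegrable.mul_continuousOn
        (Monotone.intervalIntegrable (fun u v h => hr (by linarith))) (jDk_continuous N).continuousOn
    have iL : ∀ r : ℝ → ℝ, Monotone r → IntervalIntegrable (fun t => r (x - t) * jDk N t)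
        MeasureTheory.volume 0 Real.pi := fun r hr =>
      IntervalIntegrable.mul_continuousOn
        (Antitone.intervalIntegrable (fun u v h => hr (by linarith))) (jDk_continuous N).continuousOn
    simp only [hf, Pi.sub_apply, sub_mul]
    rw [intervalIntegral.integral_sub (iR p hp) (iR q hq),
      intervalIntegral.integral_sub (iL p hp) (iL q hq)]
    ring
  · field_simp
    ring
end

section
/- There exists an absolute constant A > 0 with the following property: for every n and every primitive subgroup G of the symmetric group S_n that does not contain the alternating group A_n, if c denotes the class of G (the smallest number c > 1 of points moved by some non-identity element of G), then n ≤ A · c² · log c. In particular, for each fixed c there are only finitely many degrees n admitting a primitive group of class c other than the symmetric and alternating groups (Jordan's finiteness theorem on the class of primitive groups). -/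
set_option linter.unusedSectionVars false

namespace JordanClass

open Finset

section
variable {α : Type*} [Fintype α] [DecidableEq α] (G : Subgroup (Equiv.Perm α))

/-- `z` does not distinguish `x` and `y`. -/
def T (z x y : α) : Prop := ∃ g ∈ G, g z = z ∧ g x = y

open Classical in
/-- The orbit of `x` under the stabilizer of `z`. -/
noncomputable def orb (z x : α) : Finset α := univ.filter (fun y => T G z x y)

open Classical in
/-- The set of points distinguishing `x` and `y`. -/
noncomputable def D (x y : α) : Finset α := univ.filter (fun z => ¬ T G z x y)

/-- The pair `(z,x)` is in the dominant orbital. -/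
def J (z x : α) : Prop := 2 * Fintype.card α < 3 * (orb G z x).card

variable {G}

lemma perm_apply_inv (g : Equiv.Perm α) (x : α) : g (g⁻¹ x) = x := by simp

lemma perm_inv_apply (g : Equiv.Perm α) (x : α) : g⁻¹ (g x) = x := by simp

lemma T_refl (z x : α) : T G z x x := ⟨1, G.one_mem, by simp, by simp⟩

lemma T_symm {z x y : α} (h : T G z x y) : T G z y x := by
  obtain ⟨g, hg, h1, h2⟩ := h
  refine ⟨g⁻¹, G.inv_mem hg, ?_, ?_⟩
  · rw [Equiv.Perm.inv_eq_iff_eq, h1]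
  · rw [Equiv.Perm.inv_eq_iff_eq, h2]

lemma T_trans {z x y w : α} (h : T G z x y) (h' : T G z y w) : T G z x w := by
  obtain ⟨g, hg, h1, h2⟩ := h
  obtain ⟨k, hk, h3, h4⟩ := h'
  exact ⟨k * g, G.mul_mem hk hg, by simp [h1, h3], by simp [h2, h4]⟩

lemma T_smul {g : Equiv.Perm α} (hg : g ∈ G) {z x y : α} (h : T G z x y) :
    T G (g z) (g x) (g y) := by
  obtain ⟨k, hk, h1, h2⟩ := h
  exact ⟨g * k * g⁻¹, G.mul_mem (G.mul_mem hg hk) (G.inv_mem hg), by simp [h1], by simp [h2]⟩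

lemma T_smul_iff {g : Equiv.Perm α} (hg : g ∈ G) {z x y : α} :
    T G (g z) (g x) (g y) ↔ T G z x y := by
  refine ⟨fun h => ?_, T_smul hg⟩
  simpa using T_smul (G.inv_mem hg) h

lemma mem_orb {z x y : α} : y ∈ orb G z x ↔ T G z x y := by simp [orb]

lemma mem_D {z x y : α} : z ∈ D G x y ↔ ¬ T G z x y := by simp [D]

lemma D_symm (x y : α) : D G x y = D G y x := by
  ext z; simp only [mem_D]
  exact not_congr ⟨T_symm, T_symm⟩

lemma D_self (x : α) : D G x x = ∅ := by
  ext z; simp [mem_D, T_refl]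

lemma D_triangle (x y w : α) : D G x w ⊆ D G x y ∪ D G y w := by
  intro z hz
  simp only [mem_union, mem_D] at *
  by_contra! h
  exact hz (T_trans h.1 h.2)

lemma D_smul_card {g : Equiv.Perm α} (hg : g ∈ G) (x y : α) :
    (D G (g x) (g y)).card = (D G x y).card := by
  have : D G (g x) (g y) = (D G x y).map g.toEmbedding := by
    ext z
    rw [Finset.mem_map_equiv, mem_D, mem_D]
    have := T_smul_iff (G := G) hg (z := g.symm z) (x := x) (y := y)
    rw [Equiv.apply_symm_apply] at this
    rw [this]
  rw [this, Finset.card_map]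

lemma D_subset_support {g : Equiv.Perm α} (hg : g ∈ G) (x : α) :
    D G x (g x) ⊆ g.support := by
  intro z hz
  rw [mem_D] at hz
  rw [Equiv.Perm.mem_support]
  exact fun h => hz ⟨g, hg, h, rfl⟩

lemma orb_smul_card {g : Equiv.Perm α} (hg : g ∈ G) (z x : α) :
    (orb G (g z) (g x)).card = (orb G z x).card := by
  have : orb G (g z) (g x) = (orb G z x).map g.toEmbedding := by
    ext y
    rw [Finset.mem_map_equiv, mem_orb, mem_orb]
    have := T_smul_iff (G := G) hg (z := z) (x := x) (y := g.symm y)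
    rw [Equiv.apply_symm_apply] at this
    rw [this]
  rw [this, Finset.card_map]

lemma J_smul {g : Equiv.Perm α} (hg : g ∈ G) {z x : α} : J G (g z) (g x) ↔ J G z x := by
  unfold J; rw [orb_smul_card hg]

lemma orb_congr {z x y : α} (h : T G z x y) : orb G z x = orb G z y := by
  ext w; simp only [mem_orb]
  exact ⟨fun h' => T_trans (T_symm h) h', fun h' => T_trans h h'⟩

lemma J_congr {z x y : α} (h : T G z x y) : J G z x ↔ J G z y := by
  unfold J; rw [orb_congr h]

/-- The dominant orbit of a stabilizer is unique. -/
lemma J_unique {z x y : α} (hx : J G z x) (hy : J G z y) : T G z x y := by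
  by_contra h
  have hd : Disjoint (orb G z x) (orb G z y) := by
    rw [Finset.disjoint_left]
    intro w h1 h2
    rw [mem_orb] at h1 h2
    exact h (T_trans h1 (T_symm h2))
  have h1 := Finset.card_union_of_disjoint hd
  have h2 := Finset.card_le_univ (orb G z x ∪ orb G z y)
  unfold J at hx hy
  omega

open Classical in
lemma orb_card_symm (htr : ∀ a b : α, ∃ g ∈ G, g a = b) (z x : α) :
    (orb G z x).card = (orb G x z).card := by
  let O : α → α → Prop := fun a b => ∃ g ∈ G, g z = a ∧ g x = b
  have h1 : ∀ a, (univ.filter (fun b => O a b)).card = (orb G z x).card := by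
    intro a
    obtain ⟨g, hg, rfl⟩ := htr z a
    rw [← orb_smul_card hg]
    congr 1
    ext b
    simp only [mem_filter, mem_univ, true_and, mem_orb, O, T]
    constructor
    · rintro ⟨k, hk, h1, h2⟩
      exact ⟨k * g⁻¹, G.mul_mem hk (G.inv_mem hg), by simp [h1], by simp [h2]⟩
    · rintro ⟨k, hk, h1, h2⟩
      exact ⟨k * g, G.mul_mem hk hg, by simp [h1], by simp [h2]⟩
  have h2 : ∀ b, (univ.filter (fun a => O a b)).card = (orb G x z).card := by
    intro a
    obtain ⟨g, hg, rfl⟩ := htr x a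
    rw [← orb_smul_card hg]
    congr 1
    ext b
    simp only [mem_filter, mem_univ, true_and, mem_orb, O, T]
    constructor
    · rintro ⟨k, hk, h1, h2⟩
      exact ⟨k * g⁻¹, G.mul_mem hk (G.inv_mem hg), by simp [h2], by simp [h1]⟩
    · rintro ⟨k, hk, h1, h2⟩
      exact ⟨k * g, G.mul_mem hk hg, by simp [h2], by simp [h1]⟩
  have h3 := Finset.sum_card_bipartiteAbove_eq_sum_card_bipartiteBelow
    (s := (univ : Finset α)) (t := (univ : Finset α)) O
  unfold Finset.bipartiteAbove Finset.bipartiteBelow at h3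
  simp only [h1, h2, sum_const, smul_eq_mul] at h3
  exact Nat.eq_of_mul_eq_mul_left (Finset.card_pos.mpr ⟨z, mem_univ z⟩) h3

lemma J_symm (htr : ∀ a b : α, ∃ g ∈ G, g a = b) {z x : α} : J G z x ↔ J G x z := by
  unfold J; rw [orb_card_symm htr]

/-- `J` is a single orbital. -/
lemma J_orbital (htr : ∀ a b : α, ∃ g ∈ G, g a = b) {a b x y : α} (h : J G a b) (h' : J G x y) :
    ∃ g ∈ G, g a = x ∧ g b = y := by
  obtain ⟨g, hg, rfl⟩ := htr a x
  obtain ⟨k, hk, h1, h2⟩ := J_unique ((J_smul hg).2 h) h'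
  exact ⟨k * g, G.mul_mem hk hg, by simp [h1], by simp [h2]⟩

/-- Primitivity in terms of invariant equivalence relations. -/
lemma prim_rel (hbl : ∀ B : Set α, MulAction.IsBlock G B → B.Subsingleton ∨ B = Set.univ)
    (r : α → α → Prop) (hrefl : ∀ a, r a a) (hsymm : ∀ a b, r a b → r b a)
    (htrans : ∀ a b c, r a b → r b c → r a c)
    (hinv : ∀ g ∈ G, ∀ a b, r a b → r (g a) (g b))
    {a b : α} (hab : a ≠ b) (h : r a b) (c : α) : r a c := by
  have hB : MulAction.IsBlock G {x | r a x} := by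
    rw [MulAction.isBlock_iff_smul_eq_of_nonempty]
    rintro ⟨g, hg⟩ ⟨w, hw1, hw2⟩
    obtain ⟨v, hv, rfl⟩ := hw1
    change r a v at hv
    change r a (g v) at hw2
    have hga : r a (g a) := htrans _ _ _ hw2 (hsymm _ _ (hinv g hg _ _ hv))
    ext y
    rw [Set.mem_smul_set_iff_inv_smul_mem]
    change r a (g⁻¹ y) ↔ r a y
    constructor
    · intro hy
      have := hinv g hg _ _ hy
      rw [perm_apply_inv] at this
      exact htrans _ _ _ hga this
    · intro hy
      have := hinv g⁻¹ (G.inv_mem hg) _ _ (htrans _ _ _ (hsymm _ _ hga) hy)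
      rwa [perm_inv_apply] at this
  rcases hbl _ hB with h1 | h1
  · exact absurd (h1 (hrefl a) h) hab
  · have : c ∈ {x | r a x} := by rw [h1]; trivial
    exact this

/-- Non-dominated case: some pair is distinguished by a third of the points. -/
lemma exists_D_large [Nonempty α] (h : ∀ z x, ¬ J G z x) :
    ∃ x y, Fintype.card α ≤ 3 * (D G x y).card := by
  classical
  obtain ⟨x⟩ := ‹Nonempty α›
  refine ⟨x, ?_⟩
  by_contra! hc
  have h3 := Finset.sum_card_bipartiteAbove_eq_sum_card_bipartiteBelow
    (s := (univ : Finset α)) (t := (univ : Finset α)) (fun y z => ¬ T G z x y)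
  have h1 : ∑ y : α, 3 * (D G x y).card < ∑ y : α, Fintype.card α :=
    Finset.sum_lt_sum_of_nonempty ⟨x, mem_univ x⟩ (fun y _ => hc y)
  have h2 : ∑ z : α, Fintype.card α ≤
      ∑ z : α, 3 * (univ.filter (fun y => ¬ T G z x y)).card := by
    refine Finset.sum_le_sum fun z _ => ?_
    have h4 := Finset.card_filter_add_card_filter_not (s := (univ : Finset α)) (fun y => T G z x y)
    have h5 := h z x
    unfold J orb at h5
    rw [Finset.card_univ] at h4
    have : (univ.filter (fun y => T G z x y)).card =
      (univ.filter (fun y => T G z x y)).card := rfl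
    convert_to Fintype.card α ≤ 3 * (univ.filter (fun y => ¬ T G z x y)).card
    omega
  unfold Finset.bipartiteAbove Finset.bipartiteBelow at h3
  rw [← Finset.mul_sum] at h1 h2
  unfold D at h1
  have h6 := h3
  simp only at h6
  omega

/-- The commutator of permutations whose supports meet in one point. -/
lemma commutator_support {σ τ : Equiv.Perm α} {a : α}
    (h : ∀ x, x ∈ σ.support → x ∈ τ.support → x = a) :
    (σ * τ * σ⁻¹ * τ⁻¹).support ⊆ {a, σ a, τ a} := by
  intro x hx
  by_contra hn
  simp only [mem_insert, mem_singleton, not_or] at hn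
  obtain ⟨h0, h1, h2⟩ := hn
  rw [Equiv.Perm.mem_support] at hx
  apply hx
  have hs : σ⁻¹ x ≠ a := fun e => h1 (by rw [← e]; simp)
  have ht : τ⁻¹ x ≠ a := fun e => h2 (by rw [← e]; simp)
  simp only [Equiv.Perm.mul_apply]
  by_cases hxt : x ∈ τ.support
  · have hxs : x ∉ σ.support := fun hxs => h0 (h x hxs hxt)
    have h3 : τ⁻¹ x ∉ σ.support := by
      intro h3
      refine ht (h _ h3 ?_)
      rw [← Equiv.Perm.support_inv] at hxt ⊢
      exact Equiv.Perm.apply_mem_support.2 hxt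
    have h4 : σ⁻¹ (τ⁻¹ x) = τ⁻¹ x := by
      rw [← Equiv.Perm.support_inv] at h3
      exact Equiv.Perm.notMem_support.1 h3
    rw [h4, perm_apply_inv]
    exact Equiv.Perm.notMem_support.1 hxs
  · have h4 : τ⁻¹ x = x := by
      rw [← Equiv.Perm.support_inv] at hxt
      exact Equiv.Perm.notMem_support.1 hxt
    rw [h4]
    have h5 : τ (σ⁻¹ x) = σ⁻¹ x := by
      by_cases hxs : x ∈ σ.support
      · rw [← Equiv.Perm.notMem_support]
        intro h6
        refine hs (h _ ?_ h6)
        rw [← Equiv.Perm.support_inv] at hxs ⊢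
        exact Equiv.Perm.apply_mem_support.2 hxs
      · have : σ⁻¹ x = x := by
          rw [← Equiv.Perm.support_inv] at hxs
          exact Equiv.Perm.notMem_support.1 hxs
        rw [this]
        exact Equiv.Perm.notMem_support.1 hxt
    rw [h5]; simp

lemma commutator_ne_one {σ τ : Equiv.Perm α} {a : α} (ha : a ∈ σ.support) (ha' : a ∈ τ.support)
    (h : ∀ x, x ∈ σ.support → x ∈ τ.support → x = a) :
    σ * τ * σ⁻¹ * τ⁻¹ ≠ 1 := by
  intro e
  have e' : σ * τ = τ * σ := by
    rw [mul_inv_eq_one, mul_inv_eq_iff_eq_mul] at e; exact e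
  have h1 : σ (τ a) = τ a := by
    rw [← Equiv.Perm.notMem_support]
    intro h1
    have := h _ h1 (Equiv.Perm.apply_mem_support.2 ha')
    exact Equiv.Perm.mem_support.1 ha' this
  have h2 : τ (σ a) = σ a := by
    rw [← Equiv.Perm.notMem_support]
    intro h1
    have := h _ (Equiv.Perm.apply_mem_support.2 ha) h1
    exact Equiv.Perm.mem_support.1 ha this
  have h3 : σ a = τ a := by
    have := congrArg (fun p : Equiv.Perm α => p a) e'
    simp only [Equiv.Perm.mul_apply] at this
    rw [h1, h2] at this
    exact this.symm
  have := h (σ a) (Equiv.Perm.apply_mem_support.2 ha)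
    (by rw [h3]; exact Equiv.Perm.apply_mem_support.2 ha')
  exact Equiv.Perm.mem_support.1 ha this

/-- In a 2-transitive group: a conjugate meeting in exactly one point. -/
lemma exists_conj [Nonempty α] (S : Finset α) (a : α) (haS : a ∈ S)
    (h2 : ∀ x y, x ≠ a → y ≠ a → T G a x y)
    (hc : (S.card - 1) * (S.card - 1) < Fintype.card α - 1) :
    ∃ g ∈ G, g a = a ∧ ∀ x ∈ S, g x ∈ S → x = a := by
  classical
  by_contra! hcon
  let H : Finset (Equiv.Perm α) := univ.filter (fun g => g ∈ G ∧ g a = a)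
  let M : α → α → Finset (Equiv.Perm α) := fun x y => H.filter (fun g => g x = y)
  have hM : ∀ x y, x ≠ a → y ≠ a → (Fintype.card α - 1) * (M x y).card = H.card := by
    intro x y hx hy
    have h3 : H.card = ∑ w ∈ univ.erase a, (M x w).card := by
      apply Finset.card_eq_sum_card_fiberwise
      intro g hg
      simp only [H, coe_filter, mem_univ, true_and, Set.mem_ofPred_eq] at hg
      simp only [coe_erase, coe_univ, Set.mem_sdiff, Set.mem_univ, Set.mem_singleton_iff, true_and]
      intro e
      exact hx (g.injective (e.trans hg.2.symm))
    have h4 : ∀ w ∈ univ.erase a, (M x w).card = (M x y).card := by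
      intro w hw
      have hw : w ≠ a := by simpa using hw
      obtain ⟨k, hk, hk1, hk2⟩ := h2 w y hw hy
      apply Finset.card_bij (fun g _ => k * g)
      · intro g hg
        simp only [M, H, mem_filter, mem_univ, true_and] at hg ⊢
        exact ⟨⟨G.mul_mem hk hg.1.1, by simp [hg.1.2, hk1]⟩, by simp [hg.2, hk2]⟩
      · intro g _ g' _ e
        exact mul_left_cancel e
      · intro g hg
        simp only [M, H, mem_filter, mem_univ, true_and] at hg
        refine ⟨k⁻¹ * g, ?_, by simp⟩
        simp only [M, H, mem_filter, mem_univ, true_and]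
        refine ⟨⟨G.mul_mem (G.inv_mem hk) hg.1.1, ?_⟩, ?_⟩
        · rw [Equiv.Perm.mul_apply, hg.1.2, Equiv.Perm.inv_eq_iff_eq, hk1]
        · rw [Equiv.Perm.mul_apply, hg.2, Equiv.Perm.inv_eq_iff_eq, hk2]
    rw [h3, Finset.sum_congr rfl h4, sum_const, smul_eq_mul,
      Finset.card_erase_of_mem (mem_univ a), Finset.card_univ]
  let P := (S.erase a) ×ˢ (S.erase a)
  have hcov : H ⊆ P.biUnion (fun p => M p.1 p.2) := by
    intro g hg
    have hg' := hg
    simp only [H, mem_filter, mem_univ, true_and] at hg'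
    obtain ⟨x, hx, hgx, hxa⟩ := hcon g hg'.1 hg'.2
    rw [mem_biUnion]
    refine ⟨(x, g x), ?_, ?_⟩
    · simp only [P, mem_product, mem_erase]
      refine ⟨⟨hxa, hx⟩, ?_, hgx⟩
      intro e
      exact hxa (g.injective (e.trans hg'.2.symm))
    · simp [M, hg]
  have h5 : H.card ≤ ∑ p ∈ P, (M p.1 p.2).card :=
    (Finset.card_le_card hcov).trans Finset.card_biUnion_le
  have h6 : (Fintype.card α - 1) * ∑ p ∈ P, (M p.1 p.2).card = P.card * H.card := by
    rw [Finset.mul_sum, Finset.sum_congr rfl (g := fun _ => H.card), sum_const, smul_eq_mul]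
    intro p hp
    simp only [P, mem_product, mem_erase] at hp
    exact hM _ _ hp.1.1 hp.2.1
  have hP : P.card = (S.card - 1) * (S.card - 1) := by
    simp [P, card_product, Finset.card_erase_of_mem haS]
  have hH : 0 < H.card := Finset.card_pos.2 ⟨1, by simp [H, G.one_mem]⟩
  have h7 := Nat.mul_le_mul_left (Fintype.card α - 1) h5
  rw [h6, hP] at h7
  have h8 := Nat.le_of_mul_le_mul_right h7 hH
  omega

end

section
variable {α : Type*} [Fintype α] [DecidableEq α]

/-- Existence of geodesics. -/
lemma exists_geodesic {Γ : SimpleGraph α} (hconn : Γ.Connected) (x y : α) :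
    ∃ f : ℕ → α, f 0 = x ∧ f (Γ.dist x y) = y ∧
      ∀ s t, s ≤ t → t ≤ Γ.dist x y → Γ.dist (f s) (f t) = t - s := by
  obtain ⟨w, hw⟩ := hconn.exists_walk_length_eq_dist x y
  have h0 : w.getVert 0 = x := by simp
  have h1 : w.getVert (Γ.dist x y) = y := by rw [← hw]; simp
  refine ⟨w.getVert, h0, h1, ?_⟩
  have hle : ∀ s k, s + k ≤ Γ.dist x y → Γ.dist (w.getVert s) (w.getVert (s + k)) ≤ k := by
    intro s k
    induction k with
    | zero => intro _; simp
    | succ k ih =>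
      intro h
      have h2 := ih (by omega)
      have h3 := hconn.dist_triangle (u := w.getVert s) (v := w.getVert (s + k))
        (w := w.getVert (s + (k + 1)))
      have h4 : Γ.dist (w.getVert (s + k)) (w.getVert (s + (k + 1))) = 1 := by
        rw [SimpleGraph.dist_eq_one_iff_adj]
        exact w.adj_getVert_succ (by omega)
      omega
  intro s t hst ht
  have h2 := hle s (t - s) (by omega)
  have h3 := hle 0 s (by omega)
  have h4 := hle t (Γ.dist x y - t) (by omega)
  rw [show s + (t - s) = t by omega] at h2
  rw [zero_add, h0] at h3
  rw [show t + (Γ.dist x y - t) = Γ.dist x y by omega, h1] at h4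
  have h5 := hconn.dist_triangle (u := x) (v := w.getVert s) (w := y)
  have h6 := hconn.dist_triangle (u := w.getVert s) (v := w.getVert t) (w := y)
  omega

variable {G : Subgroup (Equiv.Perm α)} {Γ : SimpleGraph α} {c : ℕ}

lemma mem_D_of_dist_ne (hinv : ∀ g ∈ G, ∀ a b, Γ.dist (g a) (g b) = Γ.dist a b)
    {x y z : α} (h : Γ.dist x z ≠ Γ.dist y z) : z ∈ D G x y := by
  rw [mem_D]
  rintro ⟨g, hg, h1, h2⟩
  have := hinv g hg x z
  rw [h1, h2] at this
  exact h this.symm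

lemma D_le_dist (hconn : Γ.Connected) (hadj : ∀ a b, Γ.Adj a b → (D G a b).card ≤ c) (x y : α) :
    (D G x y).card ≤ c * Γ.dist x y := by
  obtain ⟨w, hw⟩ := hconn.exists_walk_length_eq_dist x y
  rw [← hw]
  clear hw
  induction w with
  | nil => simp [D_self]
  | cons h p ih =>
    rename_i u v w
    have h1 := (Finset.card_le_card (D_triangle (G := G) u v w)).trans (Finset.card_union_le _ _)
    have h2 := hadj _ _ h
    rw [SimpleGraph.Walk.length_cons, mul_add, mul_one]
    omega

lemma dist_le_class (hconn : Γ.Connected)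
    (hinv : ∀ g ∈ G, ∀ a b, Γ.dist (g a) (g b) = Γ.dist a b)
    (hadj : ∀ a b, Γ.Adj a b → (D G a b).card ≤ c) (x y : α) :
    Γ.dist x y ≤ c := by
  obtain ⟨f, h0, h1, hf⟩ := exists_geodesic hconn x y
  rcases Nat.eq_zero_or_pos (Γ.dist x y) with h | h
  · omega
  have ha : Γ.Adj (f 0) (f 1) := by
    rw [← SimpleGraph.dist_eq_one_iff_adj, hf 0 1 (by omega) (by omega)]
  have hs : (Finset.range (Γ.dist x y)).image (fun i => f (i + 1)) ⊆ D G (f 0) (f 1) := by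
    intro z hz
    rw [Finset.mem_image] at hz
    obtain ⟨i, hi, rfl⟩ := hz
    rw [Finset.mem_range] at hi
    apply mem_D_of_dist_ne hinv
    rw [hf 0 (i + 1) (by omega) (by omega), hf 1 (i + 1) (by omega) (by omega)]
    omega
  have hcard := Finset.card_le_card hs
  rw [Finset.card_image_of_injOn, Finset.card_range] at hcard
  · exact hcard.trans (hadj _ _ ha)
  · intro i hi j hj e
    simp only [Finset.coe_range, Set.mem_Iio] at hi hj
    simp only at e
    have h2 := hf 0 (i + 1) (by omega) (by omega)
    have h3 := hf 0 (j + 1) (by omega) (by omega)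
    rw [e] at h2
    omega

/-- The case of large distance between dominant pairs. -/
lemma far_case (hconn : Γ.Connected)
    (hinv : ∀ g ∈ G, ∀ a b, Γ.dist (g a) (g b) = Γ.dist a b)
    (hadj : ∀ a b, Γ.Adj a b → (D G a b).card ≤ c)
    (htr : ∀ a b : α, ∃ g ∈ G, g a = b)
    {x y : α} (hJ : J G x y) (hfar : 3 ≤ Γ.dist x y) :
    Fintype.card α ≤ 5 * c ^ 2 := by
  classical
  let N : Finset α := univ.filter (fun v => Γ.Adj x v)
  -- the orbit of `y` is covered by the sets `D x v`
  have hcov : orb G x y ⊆ N.biUnion (fun v => D G x v) := by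
    intro z hz
    rw [mem_orb] at hz
    obtain ⟨g, hg, h1, h2⟩ := hz
    have hdz : Γ.dist x z = Γ.dist x y := by
      have := hinv g hg x y
      rwa [h1, h2] at this
    obtain ⟨f, h0, h3, hf⟩ := exists_geodesic hconn x z
    rw [Finset.mem_biUnion]
    refine ⟨f 1, ?_, ?_⟩
    · simp only [N, mem_filter, mem_univ, true_and]
      rw [← SimpleGraph.dist_eq_one_iff_adj, ← h0, hf 0 1 (by omega) (by omega)]
    · apply mem_D_of_dist_ne hinv
      have := hf 1 (Γ.dist x z) (by omega) le_rfl
      rw [h3] at this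
      omega
  have hc1 : (orb G x y).card ≤ N.card * c := by
    refine (Finset.card_le_card hcov).trans (Finset.card_biUnion_le_card_mul _ _ _ ?_)
    intro v hv
    simp only [N, mem_filter, mem_univ, true_and] at hv
    exact hadj _ _ hv
  have hc2 : N.card ≤ 3 * c := by
    obtain ⟨f, h0, h3, hf⟩ := exists_geodesic hconn x y
    have h4 : N ⊆ D G x (f 3) := by
      intro v hv
      simp only [N, mem_filter, mem_univ, true_and] at hv
      apply mem_D_of_dist_ne hinv
      rw [SimpleGraph.dist_eq_one_iff_adj.2 hv]
      intro e
      have h5 := hconn.dist_triangle (u := x) (v := v) (w := f 3)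
      rw [SimpleGraph.dist_eq_one_iff_adj.2 hv, SimpleGraph.dist_comm (u := v)] at h5
      have h6 := hf 0 3 (by omega) hfar
      rw [h0] at h6
      omega
    have h7 := D_le_dist hconn hadj x (f 3)
    have h6 := hf 0 3 (by omega) hfar
    rw [h0] at h6
    rw [h6] at h7
    have := Finset.card_le_card h4
    omega
  unfold J at hJ
  have := Nat.mul_le_mul_right c hc2
  nlinarith

/-- The case of small distance between dominant pairs. -/
lemma near_case (hbl : ∀ B : Set α, MulAction.IsBlock G B → B.Subsingleton ∨ B = Set.univ)
    (htr : ∀ a b : α, ∃ g ∈ G, g a = b)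
    {x₀ y₀ : α} (hJ : J G x₀ y₀) {p q : α} (hpq : p ≠ q) (hnJ : ¬ J G p q)
    (hself : ∀ a, ¬ J G a a)
    (hD : ∀ a b, J G a b → (D G a b).card ≤ 2 * c) :
    Fintype.card α ≤ 24 * c ^ 2 := by
  classical
  -- dominant pairs have a common neighbour in the complement
  have hcom : ∃ u v w, ¬ J G u v ∧ ¬ J G v w ∧ J G u w := by
    by_contra! hcon
    have hall := prim_rel hbl (fun a b => ¬ J G a b) hself
      (fun a b h => by rwa [J_symm htr]) hcon
      (fun g hg a b h => by rwa [J_smul hg]) hpq hnJ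
    obtain ⟨g, hg, rfl⟩ := htr x₀ p
    exact hall (g y₀) ((J_smul hg).2 hJ)
  obtain ⟨u, v, w, huv, hvw, huw⟩ := hcom
  have hcom' : ∀ x y, J G x y → ∃ z, ¬ J G x z ∧ ¬ J G z y := by
    intro x y hxy
    obtain ⟨g, hg, rfl, rfl⟩ := J_orbital htr huw hxy
    exact ⟨g v, by rwa [J_smul hg], by rwa [J_smul hg]⟩
  let K : α → Finset α := fun x => univ.filter (fun y => ¬ J G x y)
  have hK : ∀ x y, y ∈ K x ↔ ¬ J G x y := by intro x y; simp [K]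
  have hKcard : ∀ x, (K x).card = (K x₀).card := by
    intro x
    obtain ⟨g, hg, rfl⟩ := htr x₀ x
    have : K (g x₀) = (K x₀).map g.toEmbedding := by
      ext z
      rw [Finset.mem_map_equiv, hK, hK]
      have := J_smul (G := G) hg (z := x₀) (x := g.symm z)
      rw [Equiv.apply_symm_apply] at this
      rw [this]
    rw [this, Finset.card_map]
  let P : Finset α := univ.filter (fun y => J G x₀ y)
  have hPK : P.card + (K x₀).card = Fintype.card α := by
    rw [← Finset.card_univ]
    exact Finset.card_filter_add_card_filter_not _
  have hP : 2 * Fintype.card α < 3 * P.card := by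
    have : orb G x₀ y₀ ⊆ P := by
      intro z hz
      rw [mem_orb] at hz
      simp only [P, mem_filter, mem_univ, true_and]
      exact (J_congr hz).1 hJ
    have := Finset.card_le_card this
    unfold J at hJ
    omega
  set k := (K x₀).card with hk
  have hkpos : 0 < k := Finset.card_pos.2 ⟨x₀, (hK _ _).2 (hself _)⟩
  -- `|P| ≤ k²`
  have hPle : P.card ≤ k * k := by
    have hsub : P ⊆ (K x₀).biUnion K := by
      intro y hy
      simp only [P, mem_filter, mem_univ, true_and] at hy
      obtain ⟨z, h1, h2⟩ := hcom' _ _ hy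
      rw [Finset.mem_biUnion]
      exact ⟨z, (hK _ _).2 h1, (hK _ _).2 h2⟩
    refine (Finset.card_le_card hsub).trans (Finset.card_biUnion_le_card_mul _ _ _ ?_)
    intro z _
    rw [hKcard]
  -- some dominant pair with few common neighbours
  have hex : ∃ y ∈ P, 2 * (K x₀ ∩ K y).card ≤ k := by
    by_contra! hcon
    have h1 : ∑ y ∈ P, (K x₀ ∩ K y).card ≤ k * k := by
      have h3 := Finset.sum_card_bipartiteAbove_eq_sum_card_bipartiteBelow
        (s := P) (t := K x₀) (fun y z => ¬ J G y z)
      have h4 : ∀ y ∈ P, (K x₀ ∩ K y).card =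
          (Finset.bipartiteAbove (fun y z => ¬ J G y z) (K x₀) y).card := by
        intro y _
        congr 1
        ext z
        simp [Finset.mem_bipartiteAbove, hK]
      rw [Finset.sum_congr rfl h4, h3]
      have h5 : ∀ z ∈ K x₀, (Finset.bipartiteBelow (fun y z => ¬ J G y z) P z).card ≤ k := by
        intro z _
        rw [← hKcard z]
        apply Finset.card_le_card
        intro y hy
        rw [Finset.mem_bipartiteBelow] at hy
        rw [hK, J_symm htr]
        exact hy.2
      have := Finset.sum_le_card_nsmul _ _ _ h5
      simpa using this
    have h2 : ∑ y ∈ P, (k + 1) ≤ ∑ y ∈ P, 2 * (K x₀ ∩ K y).card :=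
      Finset.sum_le_sum fun y hy => hcon y hy
    rw [← Finset.mul_sum, sum_const, smul_eq_mul] at h2
    have h6 : 2 * k < P.card := by omega
    nlinarith
  obtain ⟨y, hy, hyk⟩ := hex
  simp only [P, mem_filter, mem_univ, true_and] at hy
  have hsub : K x₀ \ K y ⊆ D G x₀ y := by
    intro z hz
    rw [Finset.mem_sdiff, hK, hK, not_not] at hz
    rw [mem_D]
    intro hT
    exact hz.1 ((J_symm htr).1 ((J_congr hT).2 ((J_symm htr).1 hz.2)))
  have h1 := Finset.card_le_card hsub
  have h2 := Finset.card_sdiff_add_card_inter (K x₀) (K y)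
  have h3 := hD _ _ hy
  have h4 : k ≤ 4 * c := by omega
  nlinarith

/-- The orbital graph of the pair `(p,q)`. -/
def orbGraph (G : Subgroup (Equiv.Perm α)) (p q : α) : SimpleGraph α where
  Adj a b := a ≠ b ∧ ∃ g ∈ G, (g p = a ∧ g q = b) ∨ (g p = b ∧ g q = a)
  symm := ⟨by
    rintro a b ⟨h, g, hg, h'⟩
    exact ⟨h.symm, g, hg, h'.symm⟩⟩
  loopless := ⟨by rintro a ⟨h, _⟩; exact h rfl⟩

lemma orbGraph_smul {p q a b : α} {g : Equiv.Perm α} (hg : g ∈ G)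
    (h : (orbGraph G p q).Adj a b) : (orbGraph G p q).Adj (g a) (g b) := by
  obtain ⟨h1, k, hk, h2⟩ := h
  refine ⟨fun e => h1 (g.injective e), g * k, G.mul_mem hg hk, ?_⟩
  rcases h2 with ⟨rfl, rfl⟩ | ⟨rfl, rfl⟩
  · left; simp
  · right; simp

lemma orbGraph_reach {p q a b : α} {g : Equiv.Perm α} (hg : g ∈ G)
    (h : (orbGraph G p q).Reachable a b) : (orbGraph G p q).Reachable (g a) (g b) := by
  let φ : orbGraph G p q →g orbGraph G p q := ⟨g, fun h => orbGraph_smul hg h⟩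
  exact h.map φ

lemma orbGraph_connected
    (hbl : ∀ B : Set α, MulAction.IsBlock G B → B.Subsingleton ∨ B = Set.univ)
    {p q : α} (hpq : p ≠ q) : (orbGraph G p q).Connected := by
  have hall := prim_rel hbl (fun a b => (orbGraph G p q).Reachable a b)
    (fun a => SimpleGraph.Reachable.refl a) (fun a b h => h.symm) (fun a b c h h' => h.trans h')
    (fun g hg a b h => orbGraph_reach hg h) hpq
    (SimpleGraph.Adj.reachable ⟨hpq, 1, G.one_mem, by simp⟩)
  have : Nonempty α := ⟨p⟩
  exact ⟨fun a b => (hall a).symm.trans (hall b)⟩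

lemma orbGraph_dist
    (hbl : ∀ B : Set α, MulAction.IsBlock G B → B.Subsingleton ∨ B = Set.univ)
    {p q : α} (hpq : p ≠ q) : ∀ g ∈ G, ∀ a b,
      (orbGraph G p q).dist (g a) (g b) = (orbGraph G p q).dist a b := by
  have hle : ∀ g ∈ G, ∀ a b,
      (orbGraph G p q).dist (g a) (g b) ≤ (orbGraph G p q).dist a b := by
    intro g hg a b
    obtain ⟨w, hw⟩ := (orbGraph_connected hbl hpq).exists_walk_length_eq_dist a b
    let φ : orbGraph G p q →g orbGraph G p q := ⟨g, fun h => orbGraph_smul hg h⟩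
    rw [← hw, ← SimpleGraph.Walk.length_map φ w]
    exact SimpleGraph.dist_le (w.map φ)
  intro g hg a b
  refine le_antisymm (hle g hg a b) ?_
  have := hle g⁻¹ (G.inv_mem hg) (g a) (g b)
  simpa using this

lemma orbGraph_D {p q : α} (hc : (D G p q).card ≤ c) (a b : α)
    (h : (orbGraph G p q).Adj a b) : (D G a b).card ≤ c := by
  obtain ⟨_, g, hg, ⟨rfl, rfl⟩ | ⟨rfl, rfl⟩⟩ := h
  · rwa [D_smul_card hg]
  · rwa [D_symm, D_smul_card hg]

/-- The doubly transitive case. -/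
lemma two_trans_case
    (hprim : MulAction.IsPreprimitive G α) (hA : ¬ alternatingGroup α ≤ G)
    (h2 : ∀ a x y : α, x ≠ a → y ≠ a → T G a x y)
    (hmin : ∀ τ ∈ G, τ ≠ 1 → c ≤ τ.support.card)
    {σ : Equiv.Perm α} (hσ : σ ∈ G) (hσ1 : σ ≠ 1) (hσc : σ.support.card = c) :
    Fintype.card α ≤ c ^ 2 := by
  by_contra! hlt
  have hne : σ.support.Nonempty := by
    rw [Finset.nonempty_iff_ne_empty]
    exact fun e => hσ1 (Equiv.Perm.support_eq_empty_iff.1 e)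
  obtain ⟨a, ha⟩ := hne
  have : Nonempty α := ⟨a⟩
  have hcpos : 0 < c := by rw [← hσc]; exact Finset.card_pos.2 ⟨a, ha⟩
  obtain ⟨g, hg, hga, hg2⟩ := exists_conj (G := G) σ.support a ha (h2 a) (by
    rw [hσc]
    obtain ⟨d, rfl⟩ : ∃ d, c = d + 1 := ⟨c - 1, by omega⟩
    simp only [Nat.add_sub_cancel]
    have : d * d + 1 < Fintype.card α := by nlinarith
    omega)
  have hτsup : ∀ x, x ∈ (g * σ * g⁻¹).support ↔ g⁻¹ x ∈ σ.support := by
    intro x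
    rw [Equiv.Perm.mem_support, Equiv.Perm.mem_support, not_iff_not]
    simp only [Equiv.Perm.mul_apply]
    rw [Equiv.Perm.eq_inv_iff_eq]
  have hmeet : ∀ x, x ∈ σ.support → x ∈ (g * σ * g⁻¹).support → x = a := by
    intro x hx hx'
    rw [hτsup] at hx'
    have := hg2 _ hx' (by rwa [perm_apply_inv])
    rw [Equiv.Perm.inv_eq_iff_eq, hga] at this
    exact this
  have ha' : a ∈ (g * σ * g⁻¹).support := by
    rw [hτsup]
    have : g⁻¹ a = a := by rw [Equiv.Perm.inv_eq_iff_eq, hga]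
    rwa [this]
  have hτ : g * σ * g⁻¹ ∈ G := G.mul_mem (G.mul_mem hg hσ) (G.inv_mem hg)
  have h3 := hmin _ (G.mul_mem (G.mul_mem (G.mul_mem hσ hτ) (G.inv_mem hσ)) (G.inv_mem hτ))
    (commutator_ne_one ha ha' hmeet)
  have h4 := (Finset.card_le_card (commutator_support hmeet)).trans Finset.card_le_three
  have h5 : c ≤ 3 := h3.trans h4
  have h6 : c ≠ 1 := by rw [← hσc]; exact Equiv.Perm.card_support_ne_one σ
  obtain rfl | rfl : c = 2 ∨ c = 3 := by omega
  · have := Equiv.Perm.subgroup_eq_top_of_isPreprimitive_of_isSwap_mem hprim σ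
      (Equiv.Perm.card_support_eq_two.1 hσc) hσ
    exact hA (this ▸ le_top)
  · exact hA (Equiv.Perm.alternatingGroup_le_of_isPreprimitive_of_isThreeCycle_mem hprim
      (card_support_eq_three_iff.1 hσc) hσ)

/-- The quadratic bound. -/
lemma quadratic_bound
    (hprim : MulAction.IsPreprimitive G α) (hA : ¬ alternatingGroup α ≤ G)
    (hmin : ∀ τ ∈ G, τ ≠ 1 → c ≤ τ.support.card)
    {σ : Equiv.Perm α} (hσ : σ ∈ G) (hσ1 : σ ≠ 1) (hσc : σ.support.card = c) :
    Fintype.card α ≤ 24 * c ^ 2 := by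
  classical
  have hbl : ∀ B : Set α, MulAction.IsBlock G B → B.Subsingleton ∨ B = Set.univ :=
    fun B hB => hprim.isTrivialBlock_of_isBlock hB
  have htr : ∀ a b : α, ∃ g ∈ G, g a = b := by
    intro a b
    obtain ⟨⟨g, hg⟩, h⟩ := hprim.exists_smul_eq a b
    exact ⟨g, hg, h⟩
  have hne : σ.support.Nonempty := by
    rw [Finset.nonempty_iff_ne_empty]
    exact fun e => hσ1 (Equiv.Perm.support_eq_empty_iff.1 e)
  obtain ⟨p, hp⟩ := hne
  have hpq : p ≠ σ p := fun e => Equiv.Perm.mem_support.1 hp e.symm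
  have : Nonempty α := ⟨p⟩
  have hcard2 : 2 ≤ Fintype.card α := by
    have : Nontrivial α := ⟨⟨p, _, hpq⟩⟩
    exact Fintype.one_lt_card
  have hDc : (D G p (σ p)).card ≤ c := by
    rw [← hσc]; exact Finset.card_le_card (D_subset_support hσ p)
  have hconn := orbGraph_connected hbl hpq
  have hinv := orbGraph_dist hbl hpq
  have hadj := orbGraph_D hDc
  by_cases hdom : ∃ x y, J G x y
  · obtain ⟨x, y, hJ⟩ := hdom
    have hself : ∀ a, ¬ J G a a := by
      intro a h
      have : orb G a a ⊆ {a} := by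
        intro z hz
        rw [mem_orb] at hz
        obtain ⟨g, _, h1, h2⟩ := hz
        rw [Finset.mem_singleton, ← h2, h1]
      have := Finset.card_le_card this
      rw [Finset.card_singleton] at this
      unfold J at h
      omega
    by_cases h2 : ∀ a b, a ≠ b → J G a b
    · have := two_trans_case hprim hA
        (fun a x y hx hy => J_unique (h2 a x hx.symm) (h2 a y hy.symm)) hmin hσ hσ1 hσc
      omega
    · push Not at h2
      obtain ⟨u, v, huv, hnJ⟩ := h2
      by_cases hfar : ∃ a b, J G a b ∧ 3 ≤ (orbGraph G p (σ p)).dist a b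
      · obtain ⟨a, b, hab, hd⟩ := hfar
        have := far_case hconn hinv hadj htr hab hd
        omega
      · push Not at hfar
        refine near_case hbl htr hJ huv hnJ hself ?_
        intro a b hab
        have h3 := D_le_dist hconn hadj a b
        have h4 := hfar a b hab
        have h5 : c * (orbGraph G p (σ p)).dist a b ≤ c * 2 := Nat.mul_le_mul_left _ (by omega)
        omega
  · push Not at hdom
    obtain ⟨x, y, hxy⟩ := exists_D_large hdom
    have h1 := D_le_dist hconn hadj x y
    have h2 := dist_le_class hconn hinv hadj x y
    have h3 := Nat.mul_le_mul_left c h2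
    nlinarith

end

end JordanClass

/-- **Jordan's finiteness theorem on the class of primitive groups.** There is an absolute
constant `A > 0` such that for every `n` and every primitive subgroup `G` of `S_n`
(transitive and with no nontrivial blocks) not containing the alternating group `A_n`,
if `c` is the class of `G` (the least number `c > 1` of points moved by a non-identity
element of `G`), then `n ≤ A · c² · log c`. -/
theorem jordan_class_primitive_groups :
    ∃ A : ℝ, 0 < A ∧
      ∀ (n : ℕ) (G : Subgroup (Equiv.Perm (Fin n))),
        MulAction.IsPretransitive G (Fin n) →
        (∀ B : Set (Fin n), MulAction.IsBlock G B → B.Subsingleton ∨ B = Set.univ) →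
        ¬ alternatingGroup (Fin n) ≤ G →
        ∀ c : ℕ,
          IsLeast {d : ℕ | 1 < d ∧
            ∃ σ : Equiv.Perm (Fin n), σ ∈ G ∧ σ ≠ 1 ∧ σ.support.card = d} c →
          (n : ℝ) ≤ A * (c : ℝ) ^ 2 * Real.log c := by
  refine ⟨100, by norm_num, ?_⟩
  intro n G htr hbl hA c hc
  obtain ⟨⟨hc1, σ, hσ, hσ1, hσc⟩, hmin⟩ := hc
  have hprim : MulAction.IsPreprimitive G (Fin n) :=
    { toIsPretransitive := htr
      isTrivialBlock_of_isBlock := fun {B} hB => hbl B hB }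
  have hq := JordanClass.quadratic_bound (c := c) hprim hA (fun τ hτ hτ1 => hmin ⟨by
    have h0 : τ.support.card ≠ 0 := fun h => hτ1 (Equiv.Perm.card_support_eq_zero.1 h)
    have h1 := Equiv.Perm.card_support_ne_one τ
    omega, τ, hτ, hτ1, rfl⟩) hσ hσ1 hσc
  rw [Fintype.card_fin] at hq
  have hq' : (n : ℝ) ≤ 24 * (c : ℝ) ^ 2 := by exact_mod_cast hq
  have hlog : (1 / 2 : ℝ) ≤ Real.log c := by
    have h2 : (2 : ℝ) ≤ c := by exact_mod_cast hc1
    have := Real.log_le_log (by norm_num) h2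
    have := Real.log_two_gt_d9
    linarith
  have h3 : 0 ≤ (c : ℝ) ^ 2 := by positivity
  nlinarith [mul_le_mul_of_nonneg_left hlog h3]
end

section
/- Every finite subgroup of PGL(2, ℂ) = GL(2, ℂ)/{scalar matrices} is isomorphic to a cyclic group, a dihedral group, the alternating group A₄, the symmetric group S₄, or the alternating group A₅ (the Jordan–Klein classification of finite groups of binary linear fractional substitutions, corresponding to the rotation groups of the regular solids). -/
namespace PGLaux
open MulAction

theorem dihedral_of_index_two {G : Type*} [Group G] [Finite G] (c : G)
    (hidx : (Subgroup.zpowers c).index = 2)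
    (hinv : ∀ g : G, g ∉ Subgroup.zpowers c → g * g = 1) :
    Nonempty (G ≃* DihedralGroup (orderOf c)) := by
  have hn : 0 < orderOf c := orderOf_pos c
  have : NeZero (orderOf c) := ⟨hn.ne'⟩
  obtain ⟨s, hs⟩ : ∃ s, s ∉ Subgroup.zpowers c := by
    by_contra h
    push Not at h
    have : Subgroup.zpowers c = ⊤ := by ext x; simp [h x]
    rw [this] at hidx
    simp at hidx
  have hss := hinv s hs
  have hmem : ∀ k : ℕ, c ^ k ∈ Subgroup.zpowers c := fun k => ⟨k, by simp⟩
  have hsc : ∀ k : ℕ, s * c ^ k ∉ Subgroup.zpowers c := fun k h =>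
    hs ((Subgroup.mul_mem_cancel_right _ (hmem k)).1 h)
  have hconj : ∀ k : ℕ, c ^ k * s = s * (c ^ k)⁻¹ := by
    intro k
    have := hinv _ (hsc k)
    have h2 : s⁻¹ = s := inv_eq_of_mul_eq_one_left hss
    have h3 : c ^ k * s * c ^ k = s := by
      rw [← h2, eq_inv_iff_mul_eq_one, h2]
      have : s * (s * c ^ k * (s * c ^ k)) * s = 1 := by rw [this, mul_one, hss]
      calc _ = (s * s) * (c ^ k * s * c ^ k * s) := by rw [hss, one_mul]
        _ = _ := by simpa only [mul_assoc] using this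
    rw [eq_mul_inv_iff_mul_eq, h3]
  let p : ZMod (orderOf c) → G := fun i => c ^ i.val
  have padd : ∀ i j, p (i + j) = p i * p j := by
    intro i j
    simp only [p, ZMod.val_add, pow_mod_orderOf, pow_add]
  have pcomm : ∀ i j, p i * p j = p j * p i := by
    intro i j; rw [← padd, ← padd, add_comm]
  have psub : ∀ i j, p (i - j) = p i * (p j)⁻¹ := by
    intro i j
    rw [eq_mul_inv_iff_mul_eq, ← padd, sub_add_cancel]
  let f : DihedralGroup (orderOf c) → G := fun x => match x with
    | .r i => p i
    | .sr i => s * p i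
  have fmul : ∀ x y, f (x * y) = f x * f y := by
    rintro (i | i) (j | j)
    · exact padd i j
    · show s * p (j - i) = p i * (s * p j)
      rw [← mul_assoc, show p i * s = s * (p i)⁻¹ from hconj _, psub, mul_assoc]
      congr 1
      rw [eq_inv_mul_iff_mul_eq, ← mul_assoc, pcomm i j, mul_inv_cancel_right]
    · show s * p (i + j) = s * p i * p j
      rw [padd, mul_assoc]
    · show p (j - i) = s * p i * (s * p j)
      rw [show s * p i * (s * p j) = s * (p i * s) * p j by simp only [mul_assoc],
        show p i * s = s * (p i)⁻¹ from hconj _, ← mul_assoc, hss, one_mul, psub]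
      rw [eq_inv_mul_iff_mul_eq, ← mul_assoc, pcomm i j, mul_inv_cancel_right]
  have pinj : Function.Injective p := by
    intro i j h
    apply ZMod.val_injective
    exact pow_injOn_Iio_orderOf (ZMod.val_lt i) (ZMod.val_lt j) h
  have finj : Function.Injective f := by
    rintro (i | i) (j | j) h
    · rw [pinj h]
    · exact absurd (show s * p j ∈ _ from (show p i = s * p j from h) ▸ hmem _) (hsc _)
    · exact absurd (show s * p i ∈ _ from (show s * p i = p j from h) ▸ hmem _) (hsc _)
    · rw [pinj (mul_left_cancel (show s * p i = s * p j from h))]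
  have hcard : Nat.card G = 2 * orderOf c := by
    rw [← (Subgroup.zpowers c).card_mul_index, hidx, Nat.card_zpowers, mul_comm]
  have fbij : Function.Bijective f := by
    rw [Nat.bijective_iff_injective_and_card]
    exact ⟨finj, by rw [DihedralGroup.nat_card, hcard]⟩
  exact ⟨(MulEquiv.ofBijective (MonoidHom.mk' f fmul) fbij).symm⟩

/-- embedding in S_n with full order -/
theorem perm_of_card {G : Type*} [Group G] [Finite G] {n : ℕ} {Y : Type*} [Finite Y]
    (hY : Nat.card Y = n) (f : G →* Equiv.Perm Y) (hf : Function.Injective f)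
    (hG : Nat.card G = n.factorial) : Nonempty (G ≃* Equiv.Perm (Fin n)) := by
  have hb : Function.Bijective f := by
    rw [Nat.bijective_iff_injective_and_card]
    exact ⟨hf, by rw [Nat.card_perm, hY, hG]⟩
  exact ⟨(MulEquiv.ofBijective f hb).trans (Finite.equivFinOfCardEq hY).permCongrHom⟩

theorem alt_of_card {G : Type*} [Group G] [Finite G] {n : ℕ} {Y : Type*} [Finite Y]
    (hY : Nat.card Y = n) (f : G →* Equiv.Perm Y) (hf : Function.Injective f)
    (hG : Nat.card G * 2 = n.factorial) : Nonempty (G ≃* alternatingGroup (Fin n)) := by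
  let f' : G →* Equiv.Perm (Fin n) :=
    ((Finite.equivFinOfCardEq hY).permCongrHom.toMonoidHom).comp f
  have hf' : Function.Injective f' :=
    (Finite.equivFinOfCardEq hY).permCongrHom.injective.comp hf
  let e := MonoidHom.ofInjective hf'
  have h1 : Nat.card f'.range = Nat.card G := Nat.card_congr e.symm.toEquiv
  have h2 : f'.range.index = 2 := by
    have := f'.range.card_mul_index
    rw [h1, Nat.card_perm, Nat.card_fin, ← hG] at this
    exact Nat.eq_of_mul_eq_mul_left Nat.card_pos this
  have h3 := Equiv.Perm.eq_alternatingGroup_of_index_eq_two h2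
  exact ⟨e.trans (MulEquiv.subgroupCongr h3)⟩
theorem eq_one_of_three {G X : Type*} [Group G] [MulAction G X]
    (h2 : ∀ g : G, g ≠ 1 → (fixedBy X g).ncard = 2) {g : G} {s : Set X} (hs : 2 < s.ncard)
    (hfix : ∀ x ∈ s, g • x = x) : g = 1 := by
  by_contra hg
  have h := h2 g hg
  have hfin : (fixedBy X g).Finite := Set.finite_of_ncard_ne_zero (by omega)
  have : s.ncard ≤ (fixedBy X g).ncard := Set.ncard_le_ncard (fun x hx => hfix x hx) hfin
  omega

theorem no_normal_prime {G X : Type*} [Group G] [Finite G] [MulAction G X]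
    (h2 : ∀ g : G, g ≠ 1 → (fixedBy X g).ncard = 2)
    (horb : ∀ x : X, 2 < (orbit G x).ncard) (K : Subgroup G) [K.Normal]
    (hK : (Nat.card K).Prime) : False := by
  have : Fact (Nat.card K).Prime := ⟨hK⟩
  have hne : K ≠ ⊥ := by
    rintro rfl
    simp at hK
    exact Nat.not_prime_one hK
  obtain ⟨⟨g, hgK⟩, hg1'⟩ := Subgroup.ne_bot_iff_exists_ne_one.1 hne
  have hg1 : g ≠ 1 := fun h => hg1' (Subtype.ext h)
  have hgen : ∀ k ∈ K, k ∈ Subgroup.zpowers g := by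
    intro k hk
    have h1 : Subgroup.zpowers (⟨g, hgK⟩ : K) = ⊤ :=
      zpowers_eq_top_of_prime_card rfl (fun h => hg1 (congrArg Subtype.val h))
    have : (⟨k, hk⟩ : K) ∈ Subgroup.zpowers (⟨g, hgK⟩ : K) := by rw [h1]; trivial
    obtain ⟨n, hn⟩ := this
    exact ⟨n, by simpa using congrArg Subtype.val hn⟩
  have hf := h2 g hg1
  have hfin : (fixedBy X g).Finite := Set.finite_of_ncard_ne_zero (by omega)
  obtain ⟨x, hx⟩ : (fixedBy X g).Nonempty := Set.nonempty_of_ncard_ne_zero (by omega)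
  have hsub : orbit G x ⊆ fixedBy X g := by
    rintro _ ⟨a, rfl⟩
    have h3 : a⁻¹ * g * a ∈ Subgroup.zpowers g := hgen _ (by
      simpa using (inferInstance : K.Normal).conj_mem g hgK a⁻¹)
    have h4 : (a⁻¹ * g * a) • x = x := by
      have : Subgroup.zpowers g ≤ stabilizer G x := by
        rw [Subgroup.zpowers_le]; exact hx
      exact this h3
    show g • a • x = a • x
    rw [mul_smul, mul_smul, inv_smul_eq_iff] at h4
    exact h4
  have := Set.ncard_le_ncard hsub hfin
  have := horb x
  omega

theorem card_orbit_mul_stab {G X : Type*} [Group G] [Finite G] [MulAction G X] (x : X) :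
    (orbit G x).ncard * Nat.card (stabilizer G x) = Nat.card G := by
  have := (stabilizer G x).index_mul_card
  rwa [MulAction.index_stabilizer] at this

theorem case_cyclic {G X : Type*} [Group G] [Finite G] [MulAction G X]
    (x : X) (hc : IsCyclic (stabilizer G x)) (hx : (orbit G x).ncard = 1) : IsCyclic G := by
  have h : (stabilizer G x).index = 1 := by rw [MulAction.index_stabilizer, hx]
  rw [Subgroup.index_eq_one] at h
  rw [h] at hc
  exact (Subgroup.topEquiv (G := G)).isCyclic.1 hc

theorem case_dihedral {G X : Type*} [Group G] [Finite G] [MulAction G X]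
    (h2 : ∀ g : G, g ≠ 1 → (fixedBy X g).ncard = 2)
    (x : X) (hc : IsCyclic (stabilizer G x)) (hx : (orbit G x).ncard = 2) :
    ∃ m : ℕ, 0 < m ∧ Nonempty (G ≃* DihedralGroup m) := by
  obtain ⟨c, hcg⟩ := (Subgroup.isCyclic_iff_exists_zpowers_eq_top _).1 hc
  refine ⟨orderOf c, orderOf_pos c, dihedral_of_index_two c ?_ ?_⟩
  · rw [hcg, MulAction.index_stabilizer, hx]
  rw [hcg]
  intro g hg
  have hg1 : g ≠ 1 := fun h => hg (h ▸ one_mem _)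
  have hgx : g • x ≠ x := hg
  have hfin : (orbit G x).Finite := Set.finite_of_ncard_ne_zero (by omega)
  have horb : orbit G x = {x, g • x} := by
    symm
    apply Set.eq_of_subset_of_ncard_le _ _ hfin
    · rintro y (rfl | rfl)
      · exact mem_orbit_self _
      · exact mem_orbit _ _
    · rw [hx, Set.ncard_pair hgx.symm]
  have hggx : g • g • x = x := by
    have : g • g • x ∈ orbit G x := by rw [← mul_smul]; exact mem_orbit _ _
    rw [horb] at this
    rcases this with h | h
    · exact h
    · exact absurd (smul_left_cancel g h) hgx
  obtain ⟨y, hy⟩ : (fixedBy X g).Nonempty :=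
    Set.nonempty_of_ncard_ne_zero (by rw [h2 g hg1]; omega)
  have hy' : g • y = y := hy
  have hyx : x ≠ y := by rintro rfl; exact hgx hy'
  have hyx' : g • x ≠ y := by
    intro h
    apply hyx
    apply smul_left_cancel g
    rw [h, hy']
  apply eq_one_of_three h2 (s := {x, g • x, y})
  · rw [Set.ncard_eq_three.2 ⟨x, g • x, y, hgx.symm, hyx, hyx', rfl⟩]; omega
  · rintro z (rfl | rfl | rfl)
    · rw [mul_smul, hggx]
    · rw [mul_smul, hggx]
    · rw [mul_smul, hy', hy']

theorem case_A4 {G X : Type*} [Group G] [Finite G] [MulAction G X]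
    (h2 : ∀ g : G, g ≠ 1 → (fixedBy X g).ncard = 2) (hG : Nat.card G = 12)
    (x : X) (hx : (orbit G x).ncard = 4) :
    Nonempty (G ≃* alternatingGroup (Fin 4)) := by
  have hfin : Finite (orbit G x) := Set.finite_of_ncard_ne_zero (by omega)
  refine alt_of_card (Y := orbit G x) hx (toPermHom G (orbit G x)) ?_
    (by rw [hG]; rfl)
  rw [injective_iff_map_eq_one]
  intro g hg
  apply eq_one_of_three h2 (s := orbit G x) (by omega)
  intro y hy
  have := congrArg (fun e => ((e ⟨y, hy⟩ : orbit G x) : X)) hg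
  simpa using this

theorem mem_normalizer_of_ker {G : Type*} [Group G] {p : ℕ} {g : G}
    (hg : g ∈ (toPermHom G (Sylow p G)).ker) (P : Sylow p G) :
    g ∈ Subgroup.normalizer (P : Set G) := by
  rw [← Sylow.smul_eq_iff_mem_normalizer]
  exact congrArg (fun e => e P) (MonoidHom.mem_ker.1 hg)

theorem mem_sylow_of_normalizer {G : Type*} [Group G] {p : ℕ} {g : G} (Q : Sylow p G)
    (hg : g ∈ Subgroup.normalizer (Q : Set G)) (hp : IsPGroup p (Subgroup.zpowers g)) :
    g ∈ (Q : Subgroup G) := by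
  have := hp.inf_normalizer_sylow Q
  have h : g ∈ Subgroup.zpowers g ⊓ Subgroup.normalizer (Q : Set G) :=
    ⟨Subgroup.mem_zpowers g, hg⟩
  rw [this] at h
  exact h.2

theorem isPGroup_zpowers_of_orderOf {G : Type*} [Group G] {p : ℕ} {g : G}
    (hg : orderOf g = p) : IsPGroup p (Subgroup.zpowers g) := by
  apply IsPGroup.of_card (n := 1)
  rw [Nat.card_zpowers, hg, pow_one]

theorem card_sylow_of {G : Type*} [Group G] [Finite G] {p : ℕ} [Fact p.Prime] (n k : ℕ)
    (P : Sylow p G) (hG : Nat.card G = p ^ n * k) (hk : ¬ p ∣ k) :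
    Nat.card P = p ^ n := by
  have hp : p.Prime := Fact.out
  have hk0 : k ≠ 0 := by rintro rfl; simp at hk
  rw [P.card_eq_multiplicity, hG, Nat.factorization_mul (pow_ne_zero _ hp.ne_zero) hk0]
  simp [hp.factorization_self, Nat.factorization_eq_zero_of_not_dvd hk]

theorem sylow_normal_of_card_one {G : Type*} [Group G] [Finite G] {p : ℕ} [Fact p.Prime]
    (P : Sylow p G) (h : Nat.card (Sylow p G) = 1) : (P : Subgroup G).Normal := by
  have : Subsingleton (Sylow p G) := (Nat.card_eq_one_iff_unique.1 h).1
  exact P.normal_of_subsingleton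

theorem case_S4 {G X : Type*} [Group G] [Finite G] [MulAction G X]
    (h2 : ∀ g : G, g ≠ 1 → (fixedBy X g).ncard = 2) (hG : Nat.card G = 24)
    (horb : ∀ x : X, 2 < (orbit G x).ncard) :
    Nonempty (G ≃* Equiv.Perm (Fin 4)) := by
  have : Fact (Nat.Prime 3) := ⟨Nat.prime_three⟩
  have hPc : ∀ P : Sylow 3 G, Nat.card P = 3 := fun P =>
    card_sylow_of 1 8 P (by rw [hG]; norm_num) (by norm_num)
  have hne1 : Nat.card (Sylow 3 G) ≠ 1 := by
    intro h
    let P : Sylow 3 G := default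
    have := sylow_normal_of_card_one P h
    exact no_normal_prime h2 horb (P : Subgroup G) (by rw [hPc P]; exact Nat.prime_three)
  have hn : Nat.card (Sylow 3 G) = 4 := by
    let P : Sylow 3 G := default
    have h1 := P.card_dvd_index
    have h3 : (P : Subgroup G).index = 8 := by
      have := (P : Subgroup G).card_mul_index
      rw [hPc P, hG] at this
      omega
    rw [h3] at h1
    have h4 := card_sylow_modEq_one 3 G
    have h5 := Nat.le_of_dvd (by norm_num) h1
    unfold Nat.ModEq at h4
    interval_cases (Nat.card (Sylow 3 G)) <;> omega
  refine perm_of_card hn (toPermHom G (Sylow 3 G)) ?_ (by rw [hG]; rfl)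
  rw [← MonoidHom.ker_eq_bot_iff]
  set K := (toPermHom G (Sylow 3 G)).ker with hK
  have hKd : Nat.card K ∣ 6 := by
    let P : Sylow 3 G := default
    have h1 : K ≤ Subgroup.normalizer (P : Set G) := fun g hg => mem_normalizer_of_ker hg P
    have h3 := P.card_eq_index_normalizer
    have h4 := (Subgroup.normalizer (P : Set G)).card_mul_index
    rw [hG, ← h3, hn] at h4
    have h5 : Nat.card (Subgroup.normalizer (P : Set G)) = 6 := by omega
    rw [← h5]
    exact Subgroup.card_dvd_of_le h1
  have hK3 : ¬ 3 ∣ Nat.card K := by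
    intro h
    obtain ⟨⟨g, hgK⟩, hg⟩ := exists_prime_orderOf_dvd_card' 3 h
    rw [Subgroup.orderOf_mk] at hg
    apply hne1
    have hQ : ∀ Q : Sylow 3 G, Subgroup.zpowers g = (Q : Subgroup G) := by
      intro Q
      apply Subgroup.eq_of_le_of_card_ge
      · rw [Subgroup.zpowers_le]
        exact mem_sylow_of_normalizer Q (mem_normalizer_of_ker hgK Q)
          (isPGroup_zpowers_of_orderOf hg)
      · rw [Nat.card_zpowers, hg]; exact (hPc Q).le
    rw [Nat.card_eq_one_iff_unique]
    exact ⟨⟨fun P Q => Sylow.ext ((hQ P).symm.trans (hQ Q))⟩, ⟨default⟩⟩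
  have hK2 : Nat.card K ≠ 2 := fun h =>
    no_normal_prime h2 horb K (by rw [h]; exact Nat.prime_two)
  rw [← Subgroup.card_eq_one]
  have := Nat.le_of_dvd (by norm_num) hKd
  interval_cases (Nat.card K) <;> omega

theorem card_centralizer_le {G X : Type*} [Group G] [Finite G] [MulAction G X]
    (h2 : ∀ g : G, g ≠ 1 → (fixedBy X g).ncard = 2)
    {t : G} (ht : t ≠ 1) {x : X} (hx : t • x = x) :
    Nat.card (Subgroup.centralizer {t}) ≤ 2 * Nat.card (stabilizer G x) := by
  have hf := h2 t ht
  have hfin : (fixedBy X t).Finite := Set.finite_of_ncard_ne_zero (by omega)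
  set C := Subgroup.centralizer {t} with hC
  rw [← card_orbit_mul_stab (G := C) x]
  apply Nat.mul_le_mul
  · rw [← hf]
    apply Set.ncard_le_ncard _ hfin
    rintro _ ⟨⟨c, hc⟩, rfl⟩
    have hct := Subgroup.mem_centralizer_singleton_iff.1 hc
    show t • c • x = c • x
    rw [← mul_smul, ← hct, mul_smul, hx]
  · have hinj : Function.Injective
        (fun c : stabilizer C x => (⟨((c : C) : G), c.2⟩ : stabilizer G x)) := by
      intro a b h
      exact Subtype.ext (Subtype.ext (congrArg (fun z : stabilizer G x => (z : G)) h))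
    exact Nat.card_le_card_of_injective _ hinj

theorem eq_of_card_two {G : Type*} [Group G] {H : Subgroup G} (h : Nat.card H = 2)
    {a b : G} (ha : a ∈ H) (hb : b ∈ H) (ha1 : a ≠ 1) (hb1 : b ≠ 1) : a = b := by
  by_contra hab
  have hfin : (H : Set G).Finite := Nat.finite_of_card_ne_zero (by
    show Nat.card H ≠ 0
    omega)
  have h1 : ({1, a, b} : Set G) ⊆ (H : Set G) := by
    rintro z (rfl | rfl | rfl)
    · exact H.one_mem
    · exact ha
    · exact hb
  have h2 := Set.ncard_le_ncard h1 hfin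
  rw [Set.ncard_eq_three.2 ⟨1, a, b, ha1.symm, hb1.symm, hab, rfl⟩] at h2
  have h3 : (H : Set G).ncard = 2 := h
  omega

theorem case_A5 {G X : Type*} [Group G] [Finite G] [MulAction G X]
    (h2 : ∀ g : G, g ≠ 1 → (fixedBy X g).ncard = 2) (hG : Nat.card G = 60)
    (horb : ∀ x : X, 2 < (orbit G x).ncard)
    (hst : ∀ x : X, 2 ∣ Nat.card (stabilizer G x) → Nat.card (stabilizer G x) = 2)
    (htr : ∀ x y : X, 2 ∣ Nat.card (stabilizer G x) → 2 ∣ Nat.card (stabilizer G y) →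
      y ∈ orbit G x) :
    Nonempty (G ≃* alternatingGroup (Fin 5)) := by
  classical
  have := Fintype.ofFinite G
  have : Fact (Nat.Prime 2) := ⟨Nat.prime_two⟩
  have hPc : ∀ P : Sylow 2 G, Nat.card P = 4 := fun P =>
    card_sylow_of 2 15 P (by rw [hG]; norm_num) (by norm_num)
  -- structure of nontrivial 2-elements
  have hfx : ∀ P : Sylow 2 G, ∀ t ∈ P, t ≠ 1 →
      ∃ x : X, t • x = x ∧ Nat.card (stabilizer G x) = 2 := by
    intro P t ht ht1
    obtain ⟨x, hx⟩ : (fixedBy X t).Nonempty :=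
      Set.nonempty_of_ncard_ne_zero (by rw [h2 t ht1]; omega)
    have hx' : t • x = x := hx
    refine ⟨x, hx', hst x ?_⟩
    have h4 : orderOf t ∣ 2 ^ 2 := by
      have := Subgroup.orderOf_dvd_natCard (P : Subgroup G) ht
      rwa [hPc P] at this
    obtain ⟨k, hk, hk'⟩ := (Nat.dvd_prime_pow Nat.prime_two).1 h4
    have hk0 : k ≠ 0 := by
      rintro rfl
      exact ht1 (orderOf_eq_one_iff.1 (by simpa using hk'))
    have h5 : 2 ∣ orderOf t := by rw [hk']; exact dvd_pow_self 2 hk0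
    have h6 := Subgroup.orderOf_dvd_natCard (stabilizer G x) (x := t) hx'
    exact h5.trans h6
  have hC : ∀ P : Sylow 2 G, ∀ t ∈ P, t ≠ 1 →
      (P : Subgroup G) = Subgroup.centralizer {t} := by
    intro P t ht ht1
    obtain ⟨x, hx, hx2⟩ := hfx P t ht ht1
    have hle := card_centralizer_le h2 ht1 hx
    rw [hx2] at hle
    apply Subgroup.eq_of_le_of_card_ge
    · intro a ha
      rw [Subgroup.mem_centralizer_singleton_iff]
      have hcm := IsPGroup.isMulCommutative_of_card_eq_prime_sq (p := 2) (G := P)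
        (by rw [hPc P]; norm_num)
      have := hcm.is_comm.comm (⟨a, ha⟩ : P) ⟨t, ht⟩
      exact congrArg Subtype.val this
    · exact hle.trans (hPc P).ge
  have hN : ∀ P : Sylow 2 G, Nat.card (Subgroup.normalizer (P : Set G)) = 12 := by
    intro P
    have hPs : (P : Set G).ncard = 4 := hPc P
    obtain ⟨t, htP, ht1⟩ : ∃ t ∈ (P : Set G), t ≠ 1 := by
      by_contra! h
      have : (P : Set G) ⊆ {1} := fun a ha => h a ha
      have := Set.ncard_le_ncard this
      rw [Set.ncard_singleton] at this
      omega
    obtain ⟨s, hsP, hs1, hst'⟩ : ∃ s ∈ (P : Set G), s ≠ 1 ∧ s ≠ t := by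
      by_contra! h
      have : (P : Set G) ⊆ {1, t} := fun a ha => by
        by_cases h1 : a = 1
        · exact Or.inl h1
        · exact Or.inr (h a ha h1)
      have := Set.ncard_le_ncard this
      rw [Set.ncard_pair ht1.symm] at this
      omega
    have hCt := hC P t htP ht1
    have hCs := hC P s hsP hs1
    have hmt : ∀ a, a ∈ (P : Set G) ↔ a * t = t * a := fun a => by
      show a ∈ (P : Subgroup G) ↔ _
      rw [hCt, Subgroup.mem_centralizer_singleton_iff]
    have hms : ∀ a, a ∈ (P : Set G) ↔ a * s = s * a := fun a => by
      show a ∈ (P : Subgroup G) ↔ _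
      rw [hCs, Subgroup.mem_centralizer_singleton_iff]
    obtain ⟨x, hx, hx2⟩ := hfx P t htP ht1
    obtain ⟨y, hy, hy2⟩ := hfx P s hsP hs1
    obtain ⟨g, hg⟩ := htr x y (by rw [hx2]) (by rw [hy2])
    have hg : g • x = y := hg
    have hgt : g * t * g⁻¹ = s := by
      apply eq_of_card_two hy2 _ hy _ hs1
      · show (g * t * g⁻¹) • y = y
        rw [← hg, mul_smul, mul_smul, inv_smul_smul, hx]
      · intro h
        exact ht1 (by simpa using h)
    have hgN : g ∈ Subgroup.normalizer (P : Set G) := by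
      rw [Subgroup.mem_set_normalizer_iff]
      intro h
      rw [hmt, hms, ← hgt]
      constructor
      · intro e
        have : g * h * g⁻¹ * (g * t * g⁻¹) = g * (h * t) * g⁻¹ := by group
        rw [this, e]; group
      · intro e
        have e1 : g * h * g⁻¹ * (g * t * g⁻¹) = g * (h * t) * g⁻¹ := by group
        have e2 : (g * t * g⁻¹) * (g * h * g⁻¹) = g * (t * h) * g⁻¹ := by group
        rw [e1, e2] at e
        exact mul_left_cancel (mul_right_cancel e)
    have hgP : g ∉ (P : Set G) := by
      rw [hmt]
      intro e
      apply hst'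
      rw [← hgt, e, mul_inv_cancel_right]
    have hPN : (P : Subgroup G) ≤ Subgroup.normalizer (P : Set G) := Subgroup.le_normalizer
    have hd1 : 4 ∣ Nat.card (Subgroup.normalizer (P : Set G)) := by
      rw [← hPc P]; exact Subgroup.card_dvd_of_le hPN
    have hd2 : Nat.card (Subgroup.normalizer (P : Set G)) ∣ 60 := by
      rw [← hG]; exact Subgroup.card_subgroup_dvd_card _
    have hne : Nat.card (Subgroup.normalizer (P : Set G)) ≠ 4 := by
      intro h
      have := Subgroup.eq_of_le_of_card_ge hPN (by rw [h]; exact (hPc P).ge)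
      exact hgP (by rw [← this] at hgN; exact hgN)
    have hle : Nat.card (Subgroup.normalizer (P : Set G)) ≤ 4 * 3 := by
      let f : G → G := fun n => n * t * n⁻¹
      let N : Finset G := (Subgroup.normalizer (P : Set G) : Set G).toFinset
      have hNc : Nat.card (Subgroup.normalizer (P : Set G)) = N.card := by
        have : ((Subgroup.normalizer (P : Set G) : Set G)).ncard = N.card :=
          Set.ncard_eq_toFinset_card' _
        exact this
      have hPf : (P : Set G).toFinset.card = 4 := by
        rw [← Set.ncard_eq_toFinset_card']; exact hPs
      rw [hNc]
      refine (Finset.card_le_mul_card_image (f := f) N 4 ?_).trans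
        (Nat.mul_le_mul_left 4 ?_)
      · intro a ha
        obtain ⟨n₀, hn₀, rfl⟩ := Finset.mem_image.1 ha
        rw [← hPf]
        apply Finset.card_le_card_of_injOn (fun n => n₀⁻¹ * n)
        · intro n hn
          have hn' : n * t * n⁻¹ = n₀ * t * n₀⁻¹ := (Finset.mem_filter.1 hn).2
          have : n₀⁻¹ * n ∈ (P : Set G) := by
            rw [hmt]
            have e : n * t = n₀ * t * n₀⁻¹ * n := by rw [← hn']; group
            rw [mul_assoc, e]; group
          simpa using this
        · intro a _ b _ h
          exact mul_left_cancel h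
      · have hsub : N.image f ⊆ (P : Set G).toFinset.erase 1 := by
          intro a ha
          obtain ⟨n, hn, rfl⟩ := Finset.mem_image.1 ha
          have hn' : n ∈ Subgroup.normalizer (P : Set G) := by simpa [N] using hn
          rw [Finset.mem_erase]
          refine ⟨fun h => ht1 (by simpa [f] using h), ?_⟩
          rw [Set.mem_toFinset]
          exact (Subgroup.mem_set_normalizer_iff.1 hn' t).1 htP
        refine (Finset.card_le_card hsub).trans ?_
        rw [Finset.card_erase_of_mem (by simp), hPf]
    generalize Nat.card (Subgroup.normalizer (P : Set G)) = m at *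
    interval_cases m <;> omega
  have hn : Nat.card (Sylow 2 G) = 5 := by
    let P : Sylow 2 G := default
    have h3 := P.card_eq_index_normalizer
    have h4 := (Subgroup.normalizer (P : Set G)).card_mul_index
    rw [hG, ← h3, hN P] at h4
    omega
  refine alt_of_card hn (toPermHom G (Sylow 2 G)) ?_ (by rw [hG]; rfl)
  rw [← MonoidHom.ker_eq_bot_iff]
  set K := (toPermHom G (Sylow 2 G)).ker with hK
  have hKd : Nat.card K ∣ 12 := by
    let P : Sylow 2 G := default
    rw [← hN P]
    exact Subgroup.card_dvd_of_le fun g hg => mem_normalizer_of_ker hg P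
  have hK2 : ¬ 2 ∣ Nat.card K := by
    intro h
    obtain ⟨⟨g, hgK⟩, hg⟩ := exists_prime_orderOf_dvd_card' 2 h
    rw [Subgroup.orderOf_mk] at hg
    have hg1 : g ≠ 1 := by rintro rfl; simp at hg
    have hQ : ∀ Q : Sylow 2 G, (Q : Subgroup G) = Subgroup.centralizer {g} := by
      intro Q
      exact hC Q g (mem_sylow_of_normalizer Q (mem_normalizer_of_ker hgK Q)
          (isPGroup_zpowers_of_orderOf hg)) hg1
    have : Nat.card (Sylow 2 G) = 1 := by
      rw [Nat.card_eq_one_iff_unique]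
      exact ⟨⟨fun P Q => Sylow.ext ((hQ P).trans (hQ Q).symm)⟩, ⟨default⟩⟩
    omega
  have hK3 : Nat.card K ≠ 3 := fun h =>
    no_normal_prime h2 horb K (by rw [h]; exact Nat.prime_three)
  rw [← Subgroup.card_eq_one]
  have := Nat.le_of_dvd (by norm_num) hKd
  interval_cases (Nat.card K) <;> omega

theorem arith_sorted {N a b c p q r : ℕ} (ha : a * p = N) (hb : b * q = N) (hc : c * r = N)
    (hp : 2 ≤ p) (hpq : p ≤ q) (hqr : q ≤ r) (hsum : a + b + c = N + 2) :
    c = 2 ∨ (N = 12 ∧ c = 4) ∨ (N = 24 ∧ a = 12 ∧ b = 8 ∧ c = 6) ∨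
      (N = 60 ∧ a = 30 ∧ b = 20 ∧ c = 12 ∧ p = 2 ∧ q = 3 ∧ r = 5) := by
  have hp2 : p = 2 := by
    by_contra h
    have h1 : a * 3 ≤ N := ha ▸ Nat.mul_le_mul_left a (by omega)
    have h2 : b * 3 ≤ N := hb ▸ Nat.mul_le_mul_left b (by omega)
    have h3 : c * 3 ≤ N := hc ▸ Nat.mul_le_mul_left c (by omega)
    omega
  subst hp2
  have hq3 : q < 4 := by
    by_contra h
    have h2 : b * 4 ≤ N := hb ▸ Nat.mul_le_mul_left b (by omega)
    have h3 : c * 4 ≤ N := hc ▸ Nat.mul_le_mul_left c (by omega)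
    omega
  have hq : q = 2 ∨ q = 3 := by omega
  rcases hq with rfl | rfl
  · left; omega
  · right
    have hr6 : r < 6 := by
      by_contra h
      have h3 : c * 6 ≤ N := hc ▸ Nat.mul_le_mul_left c (by omega)
      omega
    interval_cases r <;> omega

theorem main_abstract {G X : Type*} [Group G] [Finite G] [MulAction G X] [Finite X]
    (h2 : ∀ g : G, g ≠ 1 → (fixedBy X g).ncard = 2)
    (hcyc : ∀ x : X, IsCyclic (stabilizer G x))
    (hnt : ∀ x : X, stabilizer G x ≠ ⊥) :
    IsCyclic G ∨
    (∃ m : ℕ, 0 < m ∧ Nonempty (G ≃* DihedralGroup m)) ∨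
    Nonempty (G ≃* alternatingGroup (Fin 4)) ∨
    Nonempty (G ≃* Equiv.Perm (Fin 4)) ∨
    Nonempty (G ≃* alternatingGroup (Fin 5)) := by
  classical
  have := Fintype.ofFinite G
  have := Fintype.ofFinite X
  have := Fintype.ofFinite (orbitRel.Quotient G X)
  have hfx : ∀ g : G, Fintype.card (fixedBy X g) = (fixedBy X g).ncard := fun g => by
    rw [← Nat.card_eq_fintype_card]; rfl
  have hburn : 2 * (Nat.card G - 1) + Nat.card X =
      Nat.card (orbitRel.Quotient G X) * Nat.card G := by
    have h := MulAction.sum_card_fixedBy_eq_card_orbits_mul_card_group G X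
    rw [← Finset.add_sum_erase _ _ (Finset.mem_univ (1 : G))] at h
    rw [Finset.sum_congr rfl (g := fun _ => 2)
      (fun g hg => by rw [hfx, h2 g (Finset.ne_of_mem_erase hg)])] at h
    rw [hfx, fixedBy_one_eq_univ, Set.ncard_univ, Finset.sum_const,
      Finset.card_erase_of_mem (Finset.mem_univ _), Finset.card_univ, smul_eq_mul] at h
    simp only [Nat.card_eq_fintype_card] at h ⊢
    rw [← h]
    ring
  have hsum : Nat.card X = ∑ ω : orbitRel.Quotient G X, (orbit G ω.out).ncard := by
    rw [Nat.card_congr (MulAction.selfEquivSigmaOrbits G X), Nat.card_sigma]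
    rfl
  have hstab2 : ∀ x : X, 2 ≤ Nat.card (stabilizer G x) := fun x => by
    have := Subgroup.one_lt_card_iff_ne_bot (stabilizer G x) |>.2 (hnt x)
    omega
  have hNpos : 0 < Nat.card G := Nat.card_pos
  have hle : ∀ x : X, 2 * (orbit G x).ncard ≤ Nat.card G := fun x => by
    have := card_orbit_mul_stab (G := G) x
    have := Nat.mul_le_mul_left (orbit G x).ncard (hstab2 x)
    omega
  have hpos : ∀ x : X, 1 ≤ (orbit G x).ncard := fun x =>
    Nat.one_le_iff_ne_zero.2 (by
      exact ((Set.ncard_pos (Set.toFinite _)).2 ⟨x, mem_orbit_self x⟩).ne')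
  have hsum2 : 2 * Nat.card X ≤ Nat.card (orbitRel.Quotient G X) * Nat.card G := by
    rw [hsum, Finset.mul_sum, Nat.card_eq_fintype_card (α := orbitRel.Quotient G X),
      ← Finset.card_univ, ← smul_eq_mul, ← Finset.sum_const]
    exact Finset.sum_le_sum fun ω _ => hle _
  by_cases hG1 : Nat.card G = 1
  · left
    have := (Nat.card_eq_one_iff_unique.1 hG1).1
    exact isCyclic_of_subsingleton
  have hk4 : Nat.card (orbitRel.Quotient G X) < 4 := by
    by_contra h
    have : 4 * Nat.card G ≤ Nat.card (orbitRel.Quotient G X) * Nat.card G :=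
      Nat.mul_le_mul_right _ (by omega)
    omega
  have hcov : ∀ x : X, ∃ ω : orbitRel.Quotient G X, x ∈ orbit G ω.out := fun x =>
    ⟨Quotient.mk _ x, by
      have : (orbitRel G X) (Quotient.mk (orbitRel G X) x).out x := Quotient.mk_out x
      rw [orbitRel_apply] at this
      exact mem_orbit_symm.1 this⟩
  obtain ⟨k, hk⟩ : ∃ k, Nat.card (orbitRel.Quotient G X) = k := ⟨_, rfl⟩
  rw [hk] at hk4 hburn
  have e : Fin k ≃ orbitRel.Quotient G X := (Finite.equivFinOfCardEq hk).symm
  rw [← e.sum_comp] at hsum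
  interval_cases k
  · omega
  · rw [Fin.sum_univ_one] at hsum
    have := hpos (e 0).out
    omega
  · left
    rw [Fin.sum_univ_two] at hsum
    have := hpos (e 0).out
    have := hpos (e 1).out
    exact case_cyclic _ (hcyc (e 0).out) (by omega)
  · right
    rw [Fin.sum_univ_three] at hsum
    obtain ⟨x, y, z, hxy, hyz, hxyz, hcv⟩ : ∃ x y z : X,
        Nat.card (stabilizer G x) ≤ Nat.card (stabilizer G y) ∧
        Nat.card (stabilizer G y) ≤ Nat.card (stabilizer G z) ∧
        Nat.card X = (orbit G x).ncard + (orbit G y).ncard + (orbit G z).ncard ∧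
        ∀ w : X, w ∈ orbit G x ∨ w ∈ orbit G y ∨ w ∈ orbit G z := by
      have hcv : ∀ w : X, w ∈ orbit G (e 0).out ∨ w ∈ orbit G (e 1).out ∨
          w ∈ orbit G (e 2).out := by
        intro w
        obtain ⟨ω, hω⟩ := hcov w
        obtain ⟨i, rfl⟩ := e.surjective ω
        fin_cases i
        · exact Or.inl hω
        · exact Or.inr (Or.inl hω)
        · exact Or.inr (Or.inr hω)
      generalize (e 0).out = x at *
      generalize (e 1).out = y at *
      generalize (e 2).out = z at *
      rcases le_total (Nat.card (stabilizer G x)) (Nat.card (stabilizer G y)) with h1 | h1 <;>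
      rcases le_total (Nat.card (stabilizer G y)) (Nat.card (stabilizer G z)) with h2 | h2 <;>
      rcases le_total (Nat.card (stabilizer G x)) (Nat.card (stabilizer G z)) with h3 | h3
      · exact ⟨x, y, z, h1, h2, by omega, fun w => by have := hcv w; tauto⟩
      · exact ⟨x, y, z, h1, h2, by omega, fun w => by have := hcv w; tauto⟩
      · exact ⟨x, z, y, h3, h2, by omega, fun w => by have := hcv w; tauto⟩
      · exact ⟨z, x, y, h3, h1, by omega, fun w => by have := hcv w; tauto⟩
      · exact ⟨y, x, z, h1, h3, by omega, fun w => by have := hcv w; tauto⟩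
      · exact ⟨y, z, x, h2, h3, by omega, fun w => by have := hcv w; tauto⟩
      · exact ⟨z, y, x, h2, h1, by omega, fun w => by have := hcv w; tauto⟩
      · exact ⟨z, y, x, h2, h1, by omega, fun w => by have := hcv w; tauto⟩
    have hx := card_orbit_mul_stab (G := G) x
    have hy := card_orbit_mul_stab (G := G) y
    have hz := card_orbit_mul_stab (G := G) z
    have horbeq : ∀ w, orbit G w = orbit G x ∨ orbit G w = orbit G y ∨
        orbit G w = orbit G z := fun w => by
      simpa only [orbit_eq_iff] using hcv w
    rcases arith_sorted hx hy hz (hstab2 x) hxy hyz (by omega) with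
      h | ⟨hN, h⟩ | ⟨hN, ha, hb, hc⟩ | ⟨hN, ha, hb, hc, hp, hq, hr⟩
    · exact Or.inl (case_dihedral h2 z (hcyc z) h)
    · exact Or.inr (Or.inl (case_A4 h2 hN z h))
    · refine Or.inr (Or.inr (Or.inl (case_S4 h2 hN fun w => ?_)))
      rcases horbeq w with h | h | h <;> rw [h] <;> omega
    · have hcs : ∀ w, (2 ∣ Nat.card (stabilizer G w)) →
          orbit G w = orbit G x ∧ Nat.card (stabilizer G w) = 2 := by
        intro w hw
        have hwm := card_orbit_mul_stab (G := G) w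
        rcases horbeq w with h | h | h
        · refine ⟨h, ?_⟩
          rw [h] at hwm
          rw [ha, hN] at hwm
          omega
        · rw [h, hb, hN] at hwm
          omega
        · rw [h, hc, hN] at hwm
          omega
      refine Or.inr (Or.inr (Or.inr (case_A5 h2 hN (fun w => ?_)
        (fun w hw => (hcs w hw).2) (fun w v hw hv => ?_))))
      · rcases horbeq w with h | h | h <;> rw [h] <;> omega
      · rw [(hcs w hw).1, ← (hcs v hv).1]
        exact mem_orbit_self v

theorem main_abstract' {G X : Type*} [Group G] [Finite G] [MulAction G X]
    (h2 : ∀ g : G, g ≠ 1 → (fixedBy X g).ncard = 2)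
    (hcyc : ∀ x : X, IsCyclic (stabilizer G x)) :
    IsCyclic G ∨
    (∃ m : ℕ, 0 < m ∧ Nonempty (G ≃* DihedralGroup m)) ∨
    Nonempty (G ≃* alternatingGroup (Fin 4)) ∨
    Nonempty (G ≃* Equiv.Perm (Fin 4)) ∨
    Nonempty (G ≃* alternatingGroup (Fin 5)) := by
  let Y : SubMulAction G X :=
    { carrier := {x | ∃ g : G, g ≠ 1 ∧ g • x = x}
      smul_mem' := by
        rintro a x ⟨g, hg, hgx⟩
        refine ⟨a * g * a⁻¹, fun h => hg (by simpa using h), ?_⟩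
        rw [mul_smul, mul_smul, inv_smul_smul, hgx] }
  have hst : ∀ y : Y, stabilizer G y = stabilizer G (y : X) := fun y =>
    SubMulAction.stabilizer_of_subMul y
  have hYfin : Finite Y := by
    have : (⋃ g ∈ {g : G | g ≠ 1}, fixedBy X g).Finite :=
      Set.Finite.biUnion (Set.toFinite _) fun g hg =>
        Set.finite_of_ncard_ne_zero (by rw [h2 g hg]; omega)
    apply Set.Finite.subset this
    rintro x ⟨g, hg, hgx⟩
    simp only [Set.mem_iUnion]
    exact ⟨g, hg, hgx⟩
  apply main_abstract (G := G) (X := Y)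
  · intro g hg
    rw [← h2 g hg, ← Set.ncard_image_of_injective (fixedBy Y g) Subtype.val_injective]
    congr 1
    ext x
    constructor
    · rintro ⟨y, hy, rfl⟩
      exact congrArg Subtype.val (show g • y = y from hy)
    · intro hx
      exact ⟨⟨x, g, hg, hx⟩, Subtype.ext hx, rfl⟩
  · intro y
    rw [hst]
    exact hcyc _
  · intro y h
    rw [hst] at h
    obtain ⟨g, hg, hgx⟩ := y.2
    have : g ∈ stabilizer G (y : X) := hgx
    rw [h] at this
    exact hg this

section MatrixPart

open Matrix OnePoint

abbrev GL2C := Matrix.GeneralLinearGroup (Fin 2) ℂ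

theorem ncard_fixedBy_GL (g : GL2C) (hd : g.val.discr ≠ 0) :
    (fixedBy (OnePoint ℂ) g).ncard = 2 := by
  have hfp : ∀ c : ℂ, g • (c : OnePoint ℂ) = c ↔
      g 1 0 * (c * c) + (g 1 1 - g 0 0) * c + (- g 0 1) = 0 := by
    intro c
    rw [← Matrix.GeneralLinearGroup.fixpointPolynomial_aeval_eq_zero_iff]
    simp [Matrix.GeneralLinearGroup.fixpointPolynomial, sq, sub_eq_add_neg]
  have hdis : g.val.discr = discrim (g 1 0) (g 1 1 - g 0 0) (- g 0 1) := by
    simp only [discr_fin_two, discrim, trace_fin_two, det_fin_two]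
    ring
  by_cases hc : g 1 0 = 0
  · have hne : g 1 1 - g 0 0 ≠ 0 := by
      intro h
      apply hd
      rw [hdis, discrim, h, hc]
      ring
    rw [Set.ncard_eq_two]
    refine ⟨∞, ((g 0 1 / (g 1 1 - g 0 0) : ℂ) : OnePoint ℂ), infty_ne_coe _, ?_⟩
    ext x
    rw [mem_fixedBy]
    cases x with
    | infty => simp [smul_infty_eq_self_iff, hc]
    | coe c =>
      rw [hfp]
      simp only [Set.mem_insert_iff, Set.mem_singleton_iff, coe_ne_infty, false_or, coe_eq_coe]
      rw [eq_div_iff hne, hc]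
      constructor <;> intro h <;> linear_combination h
  · obtain ⟨s, hs⟩ := IsAlgClosed.exists_eq_mul_self (discrim (g 1 0) (g 1 1 - g 0 0) (- g 0 1))
    have hs0 : s ≠ 0 := by
      rintro rfl
      apply hd
      rw [hdis, hs, mul_zero]
    have h2c : 2 * g 1 0 ≠ 0 := mul_ne_zero two_ne_zero hc
    rw [Set.ncard_eq_two]
    refine ⟨(((-(g 1 1 - g 0 0) + s) / (2 * g 1 0) : ℂ) : OnePoint ℂ),
      (((-(g 1 1 - g 0 0) - s) / (2 * g 1 0) : ℂ) : OnePoint ℂ), ?_, ?_⟩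
    · rw [Ne, coe_eq_coe, div_left_inj' h2c]
      intro h
      apply hs0
      linear_combination h / 2
    · ext x
      rw [mem_fixedBy]
      cases x with
      | infty => simp [smul_infty_eq_self_iff, hc]
      | coe c =>
        rw [hfp, quadratic_eq_zero_iff hc hs]
        simp only [Set.mem_insert_iff, Set.mem_singleton_iff, coe_eq_coe]

theorem exists_smul_infty (x : OnePoint ℂ) : ∃ h : GL2C, h • (∞ : OnePoint ℂ) = x := by
  cases x with
  | infty => exact ⟨1, one_smul _ _⟩
  | coe k =>
    refine ⟨Matrix.GeneralLinearGroup.mkOfDetNeZero !![k, 1; 1, 0] (by simp), ?_⟩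
    rw [smul_infty_eq_ite]
    simp [Matrix.GeneralLinearGroup.mkOfDetNeZero]

/-- ratio of diagonal entries -/
noncomputable def chi (m : GL2C) : ℂ := m 0 0 / m 1 1

theorem chi_mul {m m' : GL2C} (h : m 1 0 = 0) (h' : m' 1 0 = 0) :
    chi (m * m') = chi m * chi m' := by
  simp [chi, Matrix.mul_apply, Fin.sum_univ_two, h, h', mul_div_mul_comm]

theorem S_entries (S : Subgroup GL2C)
    (hS : ∀ g : GL2C, g ∈ S ↔
      ∃ c : ℂˣ, (g : Matrix (Fin 2) (Fin 2) ℂ) = (c : ℂ) • (1 : Matrix (Fin 2) (Fin 2) ℂ))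
    {g : GL2C} (hg : g ∈ S) :
    g 1 0 = 0 ∧ g 0 1 = 0 ∧ g 0 0 = g 1 1 ∧ g 1 1 ≠ 0 := by
  obtain ⟨c, hc⟩ := (hS g).1 hg
  simp [hc]

theorem mem_S_of_entries (S : Subgroup GL2C)
    (hS : ∀ g : GL2C, g ∈ S ↔
      ∃ c : ℂˣ, (g : Matrix (Fin 2) (Fin 2) ℂ) = (c : ℂ) • (1 : Matrix (Fin 2) (Fin 2) ℂ))
    {g : GL2C} (h1 : g 1 0 = 0) (h2 : g 0 1 = 0) (h3 : g 0 0 = g 1 1) :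
    g ∈ S := by
  rw [hS]
  have hd := g.det_ne_zero
  rw [det_fin_two, h1, mul_zero, sub_zero] at hd
  refine ⟨Units.mk0 (g 1 1) (right_ne_zero_of_mul hd), ?_⟩
  ext i j
  fin_cases i <;> fin_cases j <;> simp [h1, h2, h3]

theorem S_smul (S : Subgroup GL2C)
    (hS : ∀ g : GL2C, g ∈ S ↔
      ∃ c : ℂˣ, (g : Matrix (Fin 2) (Fin 2) ℂ) = (c : ℂ) • (1 : Matrix (Fin 2) (Fin 2) ℂ))
    {g : GL2C} (hg : g ∈ S) (x : OnePoint ℂ) : g • x = x := by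
  obtain ⟨h1, h2, h3, h4⟩ := S_entries S hS hg
  cases x with
  | infty => rwa [smul_infty_eq_self_iff]
  | coe c =>
    rw [smul_some_eq_ite, h1, h2, h3]
    simp [h4]

theorem not_parabolic (S : Subgroup GL2C)
    (hS : ∀ g : GL2C, g ∈ S ↔
      ∃ c : ℂˣ, (g : Matrix (Fin 2) (Fin 2) ℂ) = (c : ℂ) • (1 : Matrix (Fin 2) (Fin 2) ℂ))
    {g : GL2C} {n : ℕ} (hn : n ≠ 0) (hg : g ^ n ∈ S) : ¬ g.IsParabolic := by
  intro h
  obtain ⟨c, hc⟩ := (hS _).1 hg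
  apply (h.pow hn).1
  refine ⟨c, ?_⟩
  rw [hc]
  ext i j
  simp [Matrix.scalar_apply, Matrix.diagonal_apply, Matrix.one_apply]

theorem discr_ne (S : Subgroup GL2C)
    (hS : ∀ g : GL2C, g ∈ S ↔
      ∃ c : ℂˣ, (g : Matrix (Fin 2) (Fin 2) ℂ) = (c : ℂ) • (1 : Matrix (Fin 2) (Fin 2) ℂ))
    {g : GL2C} {n : ℕ} (hn : n ≠ 0) (hg : g ^ n ∈ S) (hgS : g ∉ S) :
    g.val.discr ≠ 0 := by
  intro h
  apply not_parabolic S hS hn hg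
  refine ⟨?_, h⟩
  rintro ⟨c, hc⟩
  apply hgS
  apply mem_S_of_entries S hS <;> rw [← hc] <;> simp

theorem main_quot (S : Subgroup GL2C) [S.Normal]
    (hS : ∀ g : GL2C, g ∈ S ↔
      ∃ c : ℂˣ, (g : Matrix (Fin 2) (Fin 2) ℂ) = (c : ℂ) • (1 : Matrix (Fin 2) (Fin 2) ℂ))
    (G : Subgroup (GL2C ⧸ S)) (hG : Finite G) :
    IsCyclic G ∨
    (∃ m : ℕ, 0 < m ∧ Nonempty (G ≃* DihedralGroup m)) ∨
    Nonempty (G ≃* alternatingGroup (Fin 4)) ∨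
    Nonempty (G ≃* Equiv.Perm (Fin 4)) ∨
    Nonempty (G ≃* alternatingGroup (Fin 5)) := by
  let φ : (GL2C ⧸ S) →* Equiv.Perm (OnePoint ℂ) :=
    QuotientGroup.lift S (toPermHom GL2C (OnePoint ℂ)) (fun g hg => by
      ext x
      exact S_smul S hS hg x)
  let act : MulAction G (OnePoint ℂ) := MulAction.compHom (OnePoint ℂ) (φ.comp G.subtype)
  have hsm : ∀ (q : G) (g : GL2C), (g : GL2C ⧸ S) = q → ∀ x : OnePoint ℂ, q • x = g • x := by
    intro q g hq x
    show φ q x = g • x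
    rw [← hq]
    rfl
  have hn : Nat.card G ≠ 0 := Nat.card_pos.ne'
  have hpow : ∀ (q : G) (g : GL2C), (g : GL2C ⧸ S) = q → g ^ Nat.card G ∈ S := by
    intro q g hq
    rw [← QuotientGroup.eq_one_iff, QuotientGroup.mk_pow, hq, ← Subgroup.coe_pow, pow_card_eq_one']
    rfl
  have hone : ∀ (q : G) (g : GL2C), (g : GL2C ⧸ S) = q → (g ∈ S ↔ q = 1) := by
    intro q g hq
    rw [← QuotientGroup.eq_one_iff, hq]
    simp
  apply main_abstract' (X := OnePoint ℂ)
  · intro q hq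
    obtain ⟨g, hg⟩ := QuotientGroup.mk_surjective (q : GL2C ⧸ S)
    have h1 : fixedBy (OnePoint ℂ) q = fixedBy (OnePoint ℂ) g := by
      ext x
      rw [mem_fixedBy, mem_fixedBy, hsm q g hg]
    rw [h1]
    exact ncard_fixedBy_GL g (discr_ne S hS hn (hpow q g hg) (fun h => hq ((hone q g hg).1 h)))
  · intro x
    obtain ⟨h, hx⟩ := exists_smul_infty x
    let rep : stabilizer G x → GL2C := fun q => ((q : G) : GL2C ⧸ S).out
    have hrep : ∀ q, ((rep q : GL2C) : GL2C ⧸ S) = ((q : G) : GL2C ⧸ S) := fun q =>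
      QuotientGroup.out_eq' _
    have hup : ∀ (q : stabilizer G x) (g : GL2C), (g : GL2C ⧸ S) = ((q : G) : GL2C ⧸ S) →
        (h⁻¹ * g * h) 1 0 = 0 := by
      intro q g hg
      rw [← smul_infty_eq_self_iff, mul_smul, mul_smul, hx, inv_smul_eq_iff, hx, ← hsm q g hg]
      exact q.2
    have hwd : ∀ (q : stabilizer G x) (g : GL2C), (g : GL2C ⧸ S) = ((q : G) : GL2C ⧸ S) →
        chi (h⁻¹ * g * h) = chi (h⁻¹ * rep q * h) := by
      intro q g hg
      have hs : g⁻¹ * rep q ∈ S := QuotientGroup.eq.1 (hg.trans (hrep q).symm)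
      have hs' : h⁻¹ * (g⁻¹ * rep q) * h ∈ S := by
        simpa using (inferInstance : S.Normal).conj_mem _ hs h⁻¹
      obtain ⟨e1, e2, e3, e4⟩ := S_entries S hS hs'
      have e5 : h⁻¹ * rep q * h = (h⁻¹ * g * h) * (h⁻¹ * (g⁻¹ * rep q) * h) := by group
      rw [e5, chi_mul (hup q g hg) e1]
      have : chi (h⁻¹ * (g⁻¹ * rep q) * h) = 1 := by
        rw [chi, e3, div_self e4]
      rw [this, mul_one]
    let f : stabilizer G x →* ℂ :=
      { toFun := fun q => chi (h⁻¹ * rep q * h)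
        map_one' := by
          rw [← hwd 1 1 (by simp)]
          simp [chi]
        map_mul' := fun q r => by
          rw [← hwd (q * r) (rep q * rep r) (by rw [QuotientGroup.mk_mul, hrep, hrep]; simp)]
          rw [← chi_mul (hup q _ (hrep q)) (hup r _ (hrep r))]
          congr 1
          group }
    apply isCyclic_of_injective_ringHom f
    rw [injective_iff_map_eq_one]
    intro q hq
    have hq' : chi (h⁻¹ * rep q * h) = 1 := hq
    set m := h⁻¹ * rep q * h with hm
    have hm10 : m 1 0 = 0 := hup q _ (hrep q)
    have hm11 : m 1 1 ≠ 0 := by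
      have hd := m.det_ne_zero
      rw [det_fin_two, hm10, mul_zero, sub_zero] at hd
      exact right_ne_zero_of_mul hd
    have hm00 : m 0 0 = m 1 1 := by
      rwa [chi, div_eq_one_iff_eq hm11] at hq'
    have hnp : ¬ m.IsParabolic := by
      rw [hm, Matrix.GeneralLinearGroup.isParabolic_conj_iff']
      exact not_parabolic S hS hn (hpow q _ (hrep q))
    have hm01 : m 0 1 = 0 := by
      by_contra h01
      exact hnp ((Matrix.GeneralLinearGroup.isParabolic_iff_of_upperTriangular hm10).2
        ⟨hm00, h01⟩)
    have hmS : m ∈ S := mem_S_of_entries S hS hm10 hm01 hm00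
    have hrS : rep q ∈ S := by
      have := (inferInstance : S.Normal).conj_mem _ hmS h
      rw [hm] at this
      have e : h * (h⁻¹ * rep q * h) * h⁻¹ = rep q := by group
      rwa [e] at this
    exact Subtype.ext ((hone q _ (hrep q)).1 hrS)

end MatrixPart

end PGLaux

/-- **The Jordan–Klein classification of finite groups of binary linear fractional
substitutions.** Let `S` be the (normal) subgroup of scalar matrices in `GL(2, ℂ)`, so
that `GL(2, ℂ) ⧸ S = PGL(2, ℂ)`. Every finite subgroup of `PGL(2, ℂ)` is isomorphic to a
cyclic group, a dihedral group, the alternating group `A₄`, the symmetric group `S₄`, or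
the alternating group `A₅`. -/
theorem finite_subgroups_PGL2C
    (S : Subgroup (Matrix.GeneralLinearGroup (Fin 2) ℂ)) [S.Normal]
    (hS : ∀ g : Matrix.GeneralLinearGroup (Fin 2) ℂ,
      g ∈ S ↔ ∃ c : ℂˣ, (g : Matrix (Fin 2) (Fin 2) ℂ) = (c : ℂ) • (1 : Matrix (Fin 2) (Fin 2) ℂ))
    (G : Subgroup (Matrix.GeneralLinearGroup (Fin 2) ℂ ⧸ S)) (hG : Finite G) :
    IsCyclic G ∨
    (∃ m : ℕ, 0 < m ∧ Nonempty (G ≃* DihedralGroup m)) ∨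
    Nonempty (G ≃* alternatingGroup (Fin 4)) ∨
    Nonempty (G ≃* Equiv.Perm (Fin 4)) ∨
    Nonempty (G ≃* alternatingGroup (Fin 5)) := by
  exact PGLaux.main_quot S hS G hG
end
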